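/- Let A_• = (A_1,…,A_k) and B_• = (B_1,…,B_k) be two k-tuples of finite nonempty subsets of ℕ^n with conv(A_j) = conv(B_j) in ℝ^n for every j ∈ [k]. Then there exist a natural number d, a nonzero polynomial G_A in the A-coefficients and data, and a nonzero polynomial G_B in the B-coefficients and data, such that: whenever G_A(c,u) ≠ 0 the ML system of F = (f_1,…,f_k), f_j = Σ_{α∈A_j} c_{j,α} x^α, with data u has exactly d solutions in ℂ^{n+k}; and whenever G_B(c′,u′) ≠ 0 the ML system of G = (g_1,…,g_k), g_j = Σ_{β∈B_j} c′_{j,β} x^β, with data u′ has exactly d solutions in ℂ^{n+k}. (That is, the ML degree of a general sparse polynomial system depends only on the Newton polytopes of its members.) -/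

import Mathlib

/-!
All ML systems with given exponents form one polynomial system `mlP` with integer coefficients,
whose parameters are the coefficients of the `f_j` and the data. Choose for the supports `A` a
parameter that is algebraically independent, that is, such that each of its entries has a dual
derivation of `ℂ` (`exists_rich`). Extended by zero it is a parameter `p₁` for any supports `S ⊇ A`,
and it defines the same system. The point of the proof is that, if `S` and `A` have the same Newton
polytopes, the number of solutions at `p₁` is also the generic number of solutions for `S`
(`Rich.generic`). Using this for `S = A` and for `S = A ∪ B`, the ML degrees for `A` and `A ∪ B`
agree, and by symmetry so do those for `B` and `A ∪ B`.

Three facts give `Rich.generic`.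

* The solutions at `p₁` are nondegenerate (`Rich.det_jac_ne_zero`): differentiating the equations
  along the dual derivations shows that the columns `∂P/∂p_s` lie in the image of the Jacobian, and
  these columns span.
* Solutions do not escape to infinity as the parameter tends to `p₁` (`Rich.proper`). Because the
  Newton polytopes agree, the largest monomial of each polynomial may be taken in `A`, even for
  solutions of systems with supports `S`. After division by the largest monomials everything
  converges along an ultrafilter, except possibly the rescaled multipliers and `log |x|`. Divergent
  multipliers would produce a critical point of a face system with algebraically independent
  coefficients (`critical_torus_point_contra`), and divergent `log |x|` a rational linear relation
  between the data (`rational_span_contra`); neither exists.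
* By the two previous facts the number of solutions is constant near `p₁`
  (`locally_constant_count`). By Chevalley's theorem (`elim_dichotomy`), having at least `m`
  solutions is generically true or generically false, so the number near `p₁` is the generic one
  (`generic_count`).
-/

open MvPolynomial

/-- The polynomial `ℓ_i = u_i - x_i · Σ_j λ_j ∂f_j/∂x_i` of the ML system,
as an element of `ℂ[x_1,…,x_n,λ_1,…,λ_k]` (variables indexed by `Fin n ⊕ Fin k`). -/
noncomputable def mlEll (n k : ℕ) (f : Fin k → MvPolynomial (Fin n) ℂ)
    (u : Fin n → ℂ) (i : Fin n) : MvPolynomial (Fin n ⊕ Fin k) ℂ :=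
  C (u i) - X (Sum.inl i) *
    ∑ j : Fin k, X (Sum.inr j) * rename Sum.inl (pderiv i (f j))

/-- The solution set of the ML system `L(F)` in `ℂ^n × ℂ^k`. -/
def mlSol (n k : ℕ) (f : Fin k → MvPolynomial (Fin n) ℂ) (u : Fin n → ℂ) :
    Set ((Fin n → ℂ) × (Fin k → ℂ)) :=
  {p | (∀ i, eval (Sum.elim p.1 p.2) (mlEll n k f u i) = 0) ∧
       (∀ j, eval p.1 (f j) = 0)}

/-- The Newton polytope of a multivariate polynomial. -/
noncomputable def newt {σ : Type*} (f : MvPolynomial σ ℂ) : Set (σ → ℝ) :=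
  convexHull ℝ ((fun d : σ →₀ ℕ => fun i => ((d i : ℕ) : ℝ)) '' ↑f.support)

/-- `⟨w, x⟩` for an integer weight vector `w`. -/
def wdot {σ : Type*} [Fintype σ] (w : σ → ℤ) (x : σ → ℝ) : ℝ :=
  ∑ i, (w i : ℝ) * x i

/-- The face of `P` exposed by `w`. -/
def faceOf {σ : Type*} [Fintype σ] (w : σ → ℤ) (P : Set (σ → ℝ)) : Set (σ → ℝ) :=
  {x ∈ P | ∀ y ∈ P, wdot w x ≤ wdot w y}

/-- `val_w(P) = min_{x ∈ P} ⟨w,x⟩`. -/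
noncomputable def valOf {σ : Type*} [Fintype σ] (w : σ → ℤ) (P : Set (σ → ℝ)) : ℝ :=
  sInf (wdot w '' P)

/-- The initial polynomial `init_w(f)`: the sum of the terms of `f` whose
exponent vectors minimize `⟨w,·⟩` over the support of `f`. -/
noncomputable def initw {σ : Type*} [Fintype σ] (w : σ → ℤ) (f : MvPolynomial σ ℂ) :
    MvPolynomial σ ℂ :=
  ∑ d ∈ f.support.filter
      (fun d => ∀ d' ∈ f.support, ∑ i, w i * (d i : ℤ) ≤ ∑ i, w i * (d' i : ℤ)),
    monomial d (coeff d f)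

/-- The sparse polynomial with support `A` and coefficients `c`. -/
noncomputable def sparsePoly (n : ℕ) (A : Finset (Fin n →₀ ℕ)) (c : (Fin n →₀ ℕ) → ℂ) :
    MvPolynomial (Fin n) ℂ :=
  ∑ α ∈ A, monomial α (c α)

/-! ### Algebraically independent parameters -/

/-- Algebraically independent parameters, in the form used below: a family `p` of complex numbers
with a derivation of `ℂ` dual to each member. Members of a transcendence basis of `ℂ` over `ℚ` will
do, because a derivation of `ℚ[b]` extends to `ℂ`, the extension `ℂ / ℚ(b)` being algebraic and
separable, hence formally étale. -/
theorem exists_rich (σ : Type) [Finite σ] : ∃ p : σ → ℂ, ∀ s, ∃ D : Derivation ℤ ℂ ℂ,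
    D (p s) = 1 ∧ ∀ s', s' ≠ s → D (p s') = 0 := by
  classical
  obtain ⟨ι, b, hb⟩ := exists_isTranscendenceBasis' ℚ ℂ
  have hcard : Infinite ι := by
    have h := IsAlgClosed.cardinal_eq_cardinal_transcendence_basis_of_aleph0_lt' b hb
      (by simp) (by simpa using Cardinal.aleph0_lt_continuum)
    rw [Cardinal.infinite_iff, ← h]
    simpa using Cardinal.aleph0_le_continuum
  obtain ⟨g⟩ : Nonempty (σ ↪ ι) := by
    have := Fintype.ofFinite σ
    exact ⟨(Fintype.equivFin σ).toEmbedding.trans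
      (Fin.valEmbedding.trans (Infinite.natEmbedding ι))⟩
  refine ⟨b ∘ g, fun s => ?_⟩
  -- `ℂ` is formally étale over the polynomial ring `R`, embedded by the transcendence basis
  let R := MvPolynomial ι ℚ
  let : Algebra R ℂ := (aeval (R := ℚ) b).toAlgebra
  have hinj : Function.Injective (algebraMap R ℂ) := hb.1
  have : FaithfulSMul R ℂ := (faithfulSMul_iff_algebraMap_injective R ℂ).mpr hinj
  let : IsScalarTower ℚ R ℂ := IsScalarTower.of_algebraMap_eq' (RingHom.ext fun x => by
    change _ = aeval b (algebraMap ℚ R x)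
    rw [AlgHom.commutes])
  let K := FractionRing R
  let : Algebra K ℂ := FractionRing.liftAlgebra R ℂ
  have : IsScalarTower R K ℂ := inferInstance
  have : Algebra.IsAlgebraic R ℂ := by
    have := hb.isAlgebraic
    have hmem : ∀ q : R, aeval (R := ℚ) b q ∈ Algebra.adjoin ℚ (Set.range b) := fun q => by
      rw [Algebra.adjoin_range_eq_range_aeval]; exact ⟨q, rfl⟩
    refine Algebra.IsAlgebraic.of_ringHom_of_comp_eq
      (S := Algebra.adjoin ℚ (Set.range b)) (B := ℂ)
      ((aeval (R := ℚ) b).codRestrict (Algebra.adjoin ℚ (Set.range b)) hmem) (RingHom.id ℂ)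
      ?_ Function.injective_id (by ext <;> rfl)
    rintro ⟨y, hy⟩
    rw [Algebra.adjoin_range_eq_range_aeval] at hy
    obtain ⟨q, rfl⟩ := hy
    exact ⟨q, rfl⟩
  have : Algebra.IsAlgebraic K ℂ := by
    exact Algebra.IsAlgebraic.extendScalars (R := R) (S := K) (A := ℂ)
      (FaithfulSMul.algebraMap_injective R K)
  have : Algebra.FormallyEtale R K := Algebra.FormallyEtale.of_isLocalization (nonZeroDivisors R)
  have : Algebra.FormallyEtale K ℂ := Algebra.FormallyEtale.of_isSeparable K ℂ
  have : Algebra.FormallyEtale R ℂ := Algebra.FormallyEtale.comp R K ℂ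
  -- `Ω[ℂ/ℚ] = ℂ ⊗ Ω[R/ℚ]`, so the partial derivative `D0` of `R` extends to `ℂ`
  let D0 : Derivation ℚ R ℂ := mkDerivation ℚ (fun i => if i = g s then (1:ℂ) else 0)
  let D1 : Derivation ℚ ℂ ℂ :=
    (((D0.liftKaehlerDifferential).liftBaseChange ℂ).comp
      (KaehlerDifferential.tensorKaehlerEquivOfFormallyEtale ℚ R ℂ).symm.toLinearMap).compDer
      (KaehlerDifferential.D ℚ ℂ)
  have key : ∀ i, D1 (b i) = if i = g s then 1 else 0 := by
    intro i
    have h1 : b i = algebraMap R ℂ (X i) := by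
      change b i = aeval b (X i); simp
    rw [h1]
    change ((D0.liftKaehlerDifferential).liftBaseChange ℂ)
      ((KaehlerDifferential.tensorKaehlerEquivOfFormallyEtale ℚ R ℂ).symm
        (KaehlerDifferential.D ℚ ℂ (algebraMap R ℂ (X i)))) = _
    rw [KaehlerDifferential.tensorKaehlerEquivOfFormallyEtale_symm_D_algebraMap,
      LinearMap.liftBaseChange_tmul, one_smul, Derivation.liftKaehlerDifferential_comp_D]
    exact mkDerivation_X ℚ (fun i => if i = g s then (1:ℂ) else 0) i
  refine ⟨D1.restrictScalars ℤ, ?_, ?_⟩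
  · simp [key]
  · intro s' hs'
    simp [key, hs']

/-! ### Generic solvability of polynomial systems -/

/-- A family of polynomial equations in the unknowns `τ`, with parameters `σ`, is either solvable
for every generic parameter or unsolvable for every generic parameter. By Chevalley's theorem the
parameters for which it is solvable form a constructible set, and a constructible subset of affine
space either contains or misses a nonempty basic open set. -/
theorem elim_dichotomy {σ τ : Type} [Finite σ] [Finite τ]
    (E : Set (MvPolynomial (σ ⊕ τ) ℂ)) :
    ∃ G : MvPolynomial σ ℂ, G ≠ 0 ∧
      ((∀ p, eval p G ≠ 0 → ∃ y : τ → ℂ, ∀ P ∈ E, eval (Sum.elim p y) P = 0) ∨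
       (∀ p, eval p G ≠ 0 → ¬ ∃ y : τ → ℂ, ∀ P ∈ E, eval (Sum.elim p y) P = 0)) := by
  classical
  let f : MvPolynomial σ ℂ →+* MvPolynomial (σ ⊕ τ) ℂ :=
    (rename (R := ℂ) (Sum.inl : σ → σ ⊕ τ)).toRingHom
  have hfp : f.FinitePresentation := by
    rw [← RingHom.FinitePresentation.of_finiteType]
    refine RingHom.FiniteType.of_comp_finiteType (f := (C : ℂ →+* MvPolynomial σ ℂ)) ?_
    have : f.comp C = algebraMap ℂ (MvPolynomial (σ ⊕ τ) ℂ) := by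
      ext x; simp [f, algebraMap_eq]
    rw [this, RingHom.finiteType_algebraMap]
    infer_instance
  have hZ : Topology.IsConstructible (PrimeSpectrum.zeroLocus E) := by
    have h1 : IsOpen (PrimeSpectrum.zeroLocus E)ᶜ :=
      (PrimeSpectrum.isClosed_zeroLocus E).isOpen_compl
    have h2 : Topology.IsConstructible (PrimeSpectrum.zeroLocus E)ᶜ :=
      (TopologicalSpace.NoetherianSpace.isCompact _).isConstructible h1
    simpa using h2.compl
  obtain ⟨T, hT⟩ := PrimeSpectrum.exists_constructibleSetData_iff.mpr
    (PrimeSpectrum.isConstructible_comap_image hfp hZ)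
  -- closed points of the image are exactly the points of the base with a nonempty fibre
  have hpt : ∀ p : σ → ℂ, (∃ y : τ → ℂ, ∀ P ∈ E, eval (Sum.elim p y) P = 0) ↔
      pointToPoint (k := ℂ) p ∈ T.toSet := by
    intro p
    rw [hT]
    constructor
    · rintro ⟨y, hy⟩
      refine ⟨pointToPoint (k := ℂ) (Sum.elim p y), ?_, ?_⟩
      · intro P hP
        change P ∈ vanishingIdeal ℂ {Sum.elim p y}
        rw [mem_vanishingIdeal_singleton_iff]
        simpa [aeval_eq_eval] using hy P hP
      · ext q
        change f q ∈ vanishingIdeal ℂ {Sum.elim p y} ↔ q ∈ vanishingIdeal ℂ {p}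
        rw [mem_vanishingIdeal_singleton_iff, mem_vanishingIdeal_singleton_iff]
        simp [f, aeval_rename, Sum.elim_comp_inl]
    · rintro ⟨Q, hQ, hQp⟩
      obtain ⟨M, hM, hQM⟩ := Ideal.exists_le_maximal Q.asIdeal Q.2.ne_top
      obtain ⟨z, rfl⟩ := isMaximal_iff_eq_vanishingIdeal_singleton.mp hM
      have hzp : ∀ s, z (Sum.inl s) = p s := by
        intro s
        have h1 : (X s - C (p s)) ∈ (PrimeSpectrum.comap f Q).asIdeal := by
          rw [hQp]
          change _ ∈ vanishingIdeal ℂ {p}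
          rw [mem_vanishingIdeal_singleton_iff]; simp
        have h2 := hQM h1
        rw [mem_vanishingIdeal_singleton_iff] at h2
        simpa [f, sub_eq_zero] using h2
      refine ⟨fun t => z (Sum.inr t), fun P hP => ?_⟩
      have h3 := hQM (hQ hP)
      rw [mem_vanishingIdeal_singleton_iff] at h3
      have : Sum.elim p (fun t => z (Sum.inr t)) = z := by
        ext (s | t) <;> simp [hzp]
      rw [this]
      simpa [aeval_eq_eval] using h3
  simp_rw [hpt]
  have hmem : ∀ x, x ∈ T.toSet ↔ ∃ C ∈ T, x ∈ C.toSet := fun x => by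
    simp [PrimeSpectrum.ConstructibleSetData.toSet]
  have hmem' : ∀ (C : PrimeSpectrum.BasicConstructibleSetData (MvPolynomial σ ℂ)) (p : σ → ℂ),
      pointToPoint (k := ℂ) p ∈ C.toSet ↔ (∀ i, eval p (C.g i) = 0) ∧ eval p C.f ≠ 0 := by
    intro C p
    have : ∀ q, q ∈ (pointToPoint (k := ℂ) p).asIdeal ↔ eval p q = 0 := fun q => by
      change q ∈ vanishingIdeal ℂ {p} ↔ _
      rw [mem_vanishingIdeal_singleton_iff]; simp [aeval_eq_eval]
    simp [PrimeSpectrum.BasicConstructibleSetData.toSet, PrimeSpectrum.mem_zeroLocus,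
      Set.range_subset_iff, this]
  -- either some locally closed stratum is cut out by a single inequation, hence dense, or every
  -- stratum lies in a proper hypersurface (or is empty)
  by_cases hgen : ∃ C ∈ T, (∀ i, C.g i = 0) ∧ C.f ≠ 0
  · obtain ⟨C, hC, hg, hf⟩ := hgen
    exact ⟨C.f, hf, Or.inl fun p hp => (hmem _).2 ⟨C, hC, (hmem' C p).2 ⟨by simp [hg], hp⟩⟩⟩
  · push Not at hgen
    let h : PrimeSpectrum.BasicConstructibleSetData (MvPolynomial σ ℂ) → MvPolynomial σ ℂ :=
      fun C => if hC : ∃ i, C.g i ≠ 0 then C.g hC.choose else 1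
    refine ⟨∏ C ∈ T, h C, Finset.prod_ne_zero_iff.2 fun C _ => ?_, Or.inr fun p hp hpT => ?_⟩
    · by_cases hC : ∃ i, C.g i ≠ 0
      · simpa only [h, dif_pos hC] using hC.choose_spec
      · simp [h, hC]
    · obtain ⟨C, hC, hpC⟩ := (hmem _).1 hpT
      rw [hmem'] at hpC
      rw [map_prod, Finset.prod_ne_zero_iff] at hp
      by_cases hC' : ∃ i, C.g i ≠ 0
      · have := hp C hC
        simp only [h, dif_pos hC'] at this
        exact this (hpC.1 _)
      · push Not at hC'
        have := hgen C hC hC'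
        exact hpC.2 (by simp [this])

section
open Filter Topology

/-! ### Square systems with nondegenerate solutions -/

/-- The chain rule for a derivation of `ℂ`, which kills the integer coefficients. -/
theorem derivation_aeval {V : Type} [Fintype V] (D : Derivation ℤ ℂ ℂ) (a : V → ℂ)
    (P : MvPolynomial V ℤ) :
    D (aeval a P) = ∑ v, aeval a (pderiv v P) * D (a v) := by
  classical
  induction P using MvPolynomial.induction_on with
  | C r => simp
  | add p q hp hq => simp [hp, hq, add_mul, Finset.sum_add_distrib]
  | mul_X p w hp =>
    simp only [map_mul, aeval_X, Derivation.leibniz, smul_eq_mul, hp, pderiv_X, map_add, add_mul,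
      Finset.sum_add_distrib, Finset.mul_sum]
    simp only [Pi.single_apply, apply_ite (aeval a), map_one, map_zero, mul_ite, mul_one, mul_zero,
      ite_mul, zero_mul, Finset.sum_ite_eq, Finset.mem_univ, if_true, mul_assoc]

theorem hasStrictFDerivAt_aeval {V : Type} [Fintype V] (P : MvPolynomial V ℤ) (a : V → ℂ) :
    HasStrictFDerivAt (fun a : V → ℂ => aeval a P)
      (∑ v, aeval a (pderiv v P) • (ContinuousLinearMap.proj v : (V → ℂ) →L[ℂ] ℂ)) a := by
  classical
  induction P using MvPolynomial.induction_on with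
  | C r =>
    simp only [algHom_C]
    refine (hasStrictFDerivAt_const (𝕜 := ℂ) (algebraMap ℤ ℂ r) a).congr_fderiv ?_
    ext v
    simp
  | add p q hp hq =>
    simp only [map_add]
    refine (hp.add hq).congr_fderiv ?_
    ext v
    simp [add_mul, Finset.sum_add_distrib]
  | mul_X p w hp =>
    have h := hp.mul (ContinuousLinearMap.proj (R := ℂ) (φ := fun _ : V => ℂ) w).hasStrictFDerivAt
      (x := a)
    simp only [map_mul, aeval_X]
    refine h.congr_fderiv ?_
    ext v
    simp [pderiv_X, Pi.single_apply, apply_ite (aeval a), Finset.sum_add_distrib, mul_add,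
      Finset.mul_sum, mul_comm, mul_left_comm]

/-- The solutions, in the unknowns `τ`, of the square system `P` at the parameter `p`. The system
has integer coefficients, so that derivations of `ℂ` kill them. -/
def Sol {σ τ : Type} (P : τ → MvPolynomial (σ ⊕ τ) ℤ) (p : σ → ℂ) : Set (τ → ℂ) :=
  {y | ∀ e, aeval (Sum.elim p y) (P e) = 0}

/-- The Jacobian matrix of the system `P` with respect to the unknowns: rows are equations, columns
are unknowns. -/
noncomputable def Jac {σ τ : Type} (P : τ → MvPolynomial (σ ⊕ τ) ℤ) (p : σ → ℂ) (y : τ → ℂ) :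
    Matrix τ τ ℂ := fun e t => aeval (Sum.elim p y) (pderiv (Sum.inr t) (P e))

theorem continuous_aeval_elim {σ τ : Type} [Fintype σ] [Fintype τ] (Q : MvPolynomial (σ ⊕ τ) ℤ) :
    Continuous fun z : (σ → ℂ) × (τ → ℂ) => aeval (Sum.elim z.1 z.2) Q := by
  have h : Continuous fun z : (σ → ℂ) × (τ → ℂ) => Sum.elim z.1 z.2 := by
    refine continuous_pi fun s => ?_
    rcases s with s | s <;> simp <;> fun_prop
  exact (continuous_iff_continuousAt.2 fun a => (hasStrictFDerivAt_aeval Q a).continuousAt).comp h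

theorem natCast_le_encard_iff {α : Type} (S : Set α) (m : ℕ) :
    (m : ℕ∞) ≤ S.encard ↔ ∃ Y : Fin m → α, Function.Injective Y ∧ ∀ a, Y a ∈ S := by
  constructor
  · intro h
    obtain ⟨t, ht, htc⟩ := Set.exists_subset_encard_eq h
    have htf : t.Finite := Set.finite_of_encard_eq_coe htc
    have := htf.fintype
    have hcard : Fintype.card t = m := by
      have h1 := Set.encard_eq_coe_toFinset_card t
      rw [htc] at h1
      rw [← Set.toFinset_card]; exact_mod_cast h1.symm
    let e := (Fintype.equivFinOfCardEq hcard).symm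
    exact ⟨fun a => (e a).1, Subtype.val_injective.comp e.injective, fun a => ht (e a).2⟩
  · rintro ⟨Y, hY, hm⟩
    have h1 : (Set.univ : Set (Fin m)).encard ≤ S.encard :=
      Set.encard_le_encard_of_injOn (f := Y) (fun a _ => hm a) hY.injOn
    simpa using h1

section
variable {σ τ : Type} [Fintype σ] [Fintype τ] [DecidableEq τ]

/-- The implicit function theorem at a nondegenerate solution: nearby solutions are unique, and
solutions persist under small changes of the parameter. -/
theorem local_structure (P : τ → MvPolynomial (σ ⊕ τ) ℤ) (p₁ : σ → ℂ) (y₁ : τ → ℂ)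
    (hy : y₁ ∈ Sol P p₁) (hJ : (Jac P p₁ y₁).det ≠ 0) :
    (∃ W ∈ 𝓝 (p₁, y₁), ∀ p y y', (p, y) ∈ W → (p, y') ∈ W →
      y ∈ Sol P p → y' ∈ Sol P p → y = y') ∧
    (∀ V ∈ 𝓝 y₁, ∀ᶠ p in 𝓝 p₁, ∃ y ∈ V, y ∈ Sol P p) := by
  -- the inverse function theorem is applied to `(p, y) ↦ (p, P(p, y))`
  let Φ : (σ → ℂ) × (τ → ℂ) → (σ → ℂ) × (τ → ℂ) := fun z =>
    (z.1, fun e => aeval (Sum.elim z.1 z.2) (P e))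
  let glue : (σ → ℂ) × (τ → ℂ) →L[ℂ] (σ ⊕ τ → ℂ) := ContinuousLinearMap.pi fun s => Sum.elim
    (fun s => (ContinuousLinearMap.proj s).comp (ContinuousLinearMap.fst ℂ _ _))
    (fun t => (ContinuousLinearMap.proj t).comp (ContinuousLinearMap.snd ℂ _ _)) s
  have hglue : ∀ z : (σ → ℂ) × (τ → ℂ), glue z = Sum.elim z.1 z.2 := by
    intro z; ext (s | t) <;> simp [glue]
  let L : (σ → ℂ) × (τ → ℂ) →L[ℂ] (σ → ℂ) × (τ → ℂ) := (ContinuousLinearMap.fst ℂ _ _).prod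
    (ContinuousLinearMap.pi fun e =>
      (∑ v, aeval (Sum.elim p₁ y₁) (pderiv v (P e)) •
        (ContinuousLinearMap.proj v : (σ ⊕ τ → ℂ) →L[ℂ] ℂ)).comp glue)
  have hL : HasStrictFDerivAt Φ L (p₁, y₁) := by
    refine HasStrictFDerivAt.prodMk hasStrictFDerivAt_fst ?_
    rw [hasStrictFDerivAt_pi']
    intro e
    have h1 := hasStrictFDerivAt_aeval (P e) (glue (p₁, y₁))
    have h2 := h1.comp (p₁, y₁) glue.hasStrictFDerivAt
    simp only [hglue] at h2
    exact h2
  have hinj : Function.Injective L := by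
    rw [injective_iff_map_eq_zero]
    rintro ⟨a, b⟩ h
    have ha : a = 0 := congrArg Prod.fst h
    subst ha
    have hb : (Jac P p₁ y₁).mulVec b = 0 := by
      ext e
      have := congrFun (congrArg Prod.snd h) e
      simpa [L, hglue, Jac, Matrix.mulVec, dotProduct] using this
    have := Matrix.eq_zero_of_mulVec_eq_zero hJ hb
    rw [this]; rfl
  let L' : ((σ → ℂ) × (τ → ℂ)) ≃L[ℂ] (σ → ℂ) × (τ → ℂ) :=
    (LinearEquiv.ofInjectiveEndo L.toLinearMap hinj).toContinuousLinearEquiv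
  have hL' : HasStrictFDerivAt Φ (L' : (σ → ℂ) × (τ → ℂ) →L[ℂ] (σ → ℂ) × (τ → ℂ)) (p₁, y₁) := by
    exact hL.congr_fderiv (ContinuousLinearMap.ext fun _ => rfl)
  have hmemsol : ∀ p y, y ∈ Sol P p ↔ Φ (p, y) = (p, 0) := by
    intro p y
    simp [Sol, Φ, Prod.ext_iff, _root_.funext_iff]
  let H := hL'.toOpenPartialHomeomorph Φ
  have hsrc : (p₁, y₁) ∈ H.source := hL'.mem_toOpenPartialHomeomorph_source
  have hHΦ : ∀ z, H z = Φ z := fun z => rfl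
  refine ⟨⟨H.source, H.open_source.mem_nhds hsrc, ?_⟩, ?_⟩
  · intro p y y' h h' hs hs'
    rw [hmemsol] at hs hs'
    have := H.injOn h h' (by rw [hHΦ, hHΦ, hs, hs'])
    exact congrArg Prod.snd this
  · intro V hV
    have h1 : Φ '' (Set.univ ×ˢ V) ∈ 𝓝 (Φ (p₁, y₁)) := by
      rw [← hL'.map_nhds_eq_of_equiv]
      exact image_mem_map (prod_mem_nhds univ_mem hV)
    rw [(hmemsol _ _).1 hy] at h1
    have h2 : Tendsto (fun p : σ → ℂ => (p, (0 : τ → ℂ))) (𝓝 p₁) (𝓝 (p₁, 0)) :=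
      (Continuous.prodMk_left (0 : τ → ℂ)).continuousAt
    filter_upwards [h2 h1] with p hp
    obtain ⟨⟨p', y⟩, ⟨_, hyV⟩, hz⟩ := hp
    have : p' = p := congrArg Prod.fst hz
    subst this
    exact ⟨y, hyV, (hmemsol _ _).2 hz⟩

/-- If all solutions at `p₁` are nondegenerate and solutions cannot escape to infinity as the
parameter tends to `p₁` (`hprop`), there are finitely many of them and the number of solutions is
constant near `p₁`. Escape is ruled out along ultrafilters rather than sequences: along an
ultrafilter every bounded family converges, with no need to pass to subsequences. -/
theorem locally_constant_count (P : τ → MvPolynomial (σ ⊕ τ) ℤ) (p₁ : σ → ℂ)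
    (hreg : ∀ y ∈ Sol P p₁, (Jac P p₁ y).det ≠ 0)
    (hprop : ∀ (ι : Type) (U : Ultrafilter ι) (p : ι → σ → ℂ) (y : ι → τ → ℂ),
      Tendsto p U (𝓝 p₁) → (∀ᶠ s in (U : Filter ι), y s ∈ Sol P (p s)) →
      ∃ y₁, Tendsto y U (𝓝 y₁)) :
    (Sol P p₁).Finite ∧ ∀ᶠ p in 𝓝 p₁, (Sol P p).encard = (Sol P p₁).encard := by
  -- limits of solutions are solutions
  have hlim : ∀ (ι : Type) (U : Ultrafilter ι) (p : ι → σ → ℂ) (y : ι → τ → ℂ),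
      Tendsto p U (𝓝 p₁) → (∀ᶠ s in (U : Filter ι), y s ∈ Sol P (p s)) →
      ∃ y₁ ∈ Sol P p₁, Tendsto y U (𝓝 y₁) := by
    intro ι U p y hp hy
    obtain ⟨y₁, hy₁⟩ := hprop ι U p y hp hy
    refine ⟨y₁, fun e => ?_, hy₁⟩
    have h1 := ((continuous_aeval_elim (P e)).tendsto (p₁, y₁)).comp (hp.prodMk_nhds hy₁)
    refine tendsto_nhds_unique h1 (tendsto_const_nhds.congr' ?_)
    filter_upwards [hy] with s hs
    exact (hs e).symm
  -- an infinite solution set would accumulate at a solution, against local uniqueness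
  have hfin : (Sol P p₁).Finite := by
    by_contra hinf
    have : Infinite (Sol P p₁) := Set.infinite_coe_iff.mpr hinf
    obtain ⟨y₁, hy₁, hy⟩ := hlim (Sol P p₁) (hyperfilter (Sol P p₁)) (fun _ => p₁)
      (fun s => s.1) tendsto_const_nhds (Eventually.of_forall fun s => s.2)
    obtain ⟨⟨W, hW, hWinj⟩, -⟩ := local_structure P p₁ y₁ hy₁ (hreg _ hy₁)
    have h1 : ∀ᶠ s in (hyperfilter (Sol P p₁) : Filter (Sol P p₁)), (p₁, s.1) ∈ W :=
      (tendsto_const_nhds.prodMk_nhds hy) hW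
    have h2 : ∀ᶠ s in (hyperfilter (Sol P p₁) : Filter (Sol P p₁)), s = ⟨y₁, hy₁⟩ := by
      filter_upwards [h1] with s hs
      exact Subtype.ext (hWinj p₁ s.1 y₁ hs (mem_of_mem_nhds hW) s.2 hy₁)
    exact notMem_hyperfilter_of_finite (Set.finite_singleton _) h2
  refine ⟨hfin, ?_⟩
  have hle : ∀ᶠ p in 𝓝 p₁, (Sol P p₁).encard ≤ (Sol P p).encard := by
    obtain ⟨V, hV, hdisj⟩ := hfin.t2_separation
    have h1 : ∀ᶠ p in 𝓝 p₁, ∀ y ∈ Sol P p₁, ∃ z ∈ V y, z ∈ Sol P p := by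
      rw [hfin.eventually_all]
      intro y hy
      exact (local_structure P p₁ y hy (hreg _ hy)).2 _ ((hV y).2.mem_nhds (hV y).1)
    filter_upwards [h1] with p hp
    choose! g hgV hg using hp
    refine Set.encard_le_encard_of_injOn (f := g) (fun y hy => hg y hy) ?_
    intro y hy y' hy' h
    by_contra hne
    exact Set.disjoint_left.1 (hdisj hy hy' hne) (hgV y hy) (h ▸ hgV y' hy')
  -- `N + 1` distinct solutions near `p₁` converge to `N` solutions at `p₁`; two of them would have
  -- the same limit, against local uniqueness
  have hge : ∀ᶠ p in 𝓝 p₁, (Sol P p).encard ≤ (Sol P p₁).encard := by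
    by_contra hnot
    have hfr : ∃ᶠ p in 𝓝 p₁, (Sol P p₁).encard < (Sol P p).encard := by
      exact (Filter.not_eventually.mp hnot).mono fun p hp => not_le.mp hp
    have : NeBot (𝓝 p₁ ⊓ 𝓟 {p | (Sol P p₁).encard < (Sol P p).encard}) :=
      frequently_mem_iff_neBot.mp hfr
    let U := Ultrafilter.of (𝓝 p₁ ⊓ 𝓟 {p | (Sol P p₁).encard < (Sol P p).encard})
    have hU : (U : Filter _) ≤ 𝓝 p₁ ⊓ 𝓟 _ := Ultrafilter.of_le _
    have hU1 : Tendsto id (U : Filter (σ → ℂ)) (𝓝 p₁) := hU.trans inf_le_left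
    have hU2 : ∀ᶠ p in (U : Filter (σ → ℂ)), (Sol P p₁).encard < (Sol P p).encard :=
      (hU.trans inf_le_right) (mem_principal_self _)
    let N := (Sol P p₁).ncard
    have hY : ∀ p, (Sol P p₁).encard < (Sol P p).encard →
        ∃ Y : Fin (N + 1) → τ → ℂ, Function.Injective Y ∧ ∀ a, Y a ∈ Sol P p := by
      intro p hp
      have h1 : ((N + 1 : ℕ) : ℕ∞) ≤ (Sol P p).encard := by
        rw [← hfin.cast_ncard_eq] at hp
        simpa using Order.add_one_le_of_lt hp
      exact (natCast_le_encard_iff _ _).1 h1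
    choose! Y hYinj hYmem using hY
    have hlimY : ∀ a : Fin (N + 1), ∃ y₁ ∈ Sol P p₁, Tendsto (fun p => Y p a) U (𝓝 y₁) :=
      fun a => hlim _ U id (fun p => Y p a) hU1 (hU2.mono fun p hp => hYmem p hp a)
    choose z hz hYz using hlimY
    obtain ⟨a, b, hab, hzab⟩ : ∃ a b, a ≠ b ∧ z a = z b := by
      have := hfin.fintype
      have := Fintype.exists_ne_map_eq_of_card_lt (fun a => (⟨z a, hz a⟩ : Sol P p₁)) (by
        rw [Fintype.card_fin, ← Set.toFinset_card, ← Set.ncard_eq_toFinset_card']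
        exact Nat.lt_succ_self _)
      obtain ⟨a, b, h, h'⟩ := this
      exact ⟨a, b, h, congrArg Subtype.val h'⟩
    obtain ⟨⟨W, hW, hWinj⟩, -⟩ := local_structure P p₁ (z a) (hz a) (hreg _ (hz a))
    have h1 : ∀ᶠ p in (U : Filter (σ → ℂ)), (p, Y p a) ∈ W := (hU1.prodMk_nhds (hYz a)) hW
    have h2 : ∀ᶠ p in (U : Filter (σ → ℂ)), (p, Y p b) ∈ W :=
      (hU1.prodMk_nhds (hzab ▸ hYz b)) hW
    obtain ⟨p, h1, h2, h3⟩ := (h1.and (h2.and hU2)).exists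
    exact hab (hYinj p h3 (hWinj p _ _ h1 h2 (hYmem p h3 a) (hYmem p h3 b)))
  filter_upwards [hle, hge] with p h h' using le_antisymm h' h
end

/-! ### The generic number of solutions -/

theorem frequently_eval_ne_zero {σ : Type} [Finite σ] (p₁ : σ → ℂ) (G : MvPolynomial σ ℂ)
    (hG : G ≠ 0) : ∃ᶠ p in 𝓝 p₁, eval p G ≠ 0 := by
  have := Fintype.ofFinite σ
  intro h
  simp only [not_not] at h
  obtain ⟨ε, hε, hball⟩ := Metric.eventually_nhds_iff.1 h
  refine hG (MvPolynomial.funext_set (fun s => Metric.ball (p₁ s) ε) (fun s => ?_) fun x hx => ?_)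
  · exact infinite_of_mem_nhds (p₁ s) (Metric.ball_mem_nhds _ hε)
  · rw [map_zero]
    refine hball ((dist_pi_lt_iff hε).2 fun s => ?_)
    exact hx s (Set.mem_univ _)

section
variable {σ τ : Type} [Fintype σ] [Fintype τ]

/-- Having at least `m` solutions is generically true or generically false: it is the solvability
of a polynomial system in `m` copies of the unknowns, where `Y a ≠ Y b` is encoded by auxiliary
unknowns `z` with `∑ z t * (Y a t - Y b t) = 1` (Rabinowitsch's trick). -/
theorem le_encard_dichotomy (P : τ → MvPolynomial (σ ⊕ τ) ℤ) (m : ℕ) :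
    ∃ G : MvPolynomial σ ℂ, G ≠ 0 ∧
      ((∀ p, eval p G ≠ 0 → (m : ℕ∞) ≤ (Sol P p).encard) ∨
       (∀ p, eval p G ≠ 0 → ¬ (m : ℕ∞) ≤ (Sol P p).encard)) := by
  -- `E1` says that each copy solves the system, `E2` that two copies differ
  let T := (Fin m × τ) ⊕ (Fin m × Fin m × τ)
  let E1 : Fin m × τ → MvPolynomial (σ ⊕ T) ℂ := fun ae =>
    rename (Sum.map id fun t => Sum.inl (ae.1, t)) (map (algebraMap ℤ ℂ) (P ae.2))
  let E2 : Fin m × Fin m → MvPolynomial (σ ⊕ T) ℂ := fun ab =>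
    (∑ t, X (Sum.inr (Sum.inr (ab.1, ab.2, t))) *
      (X (Sum.inr (Sum.inl (ab.1, t))) - X (Sum.inr (Sum.inl (ab.2, t))))) - 1
  have key : ∀ p, (∃ y : T → ℂ, ∀ Q ∈ Set.range E1 ∪ E2 '' {ab | ab.1 ≠ ab.2},
      eval (Sum.elim p y) Q = 0) ↔ (m : ℕ∞) ≤ (Sol P p).encard := by
    intro p
    have h1 : ∀ (y : T → ℂ) ae, eval (Sum.elim p y) (E1 ae) =
        aeval (Sum.elim p fun t => y (Sum.inl (ae.1, t))) (P ae.2) := by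
      intro y ae
      simp only [E1, eval_rename, eval_map]
      rw [← aeval_def]
      congr 2
      ext (s | s) <;> rfl
    have h2 : ∀ (y : T → ℂ) ab, eval (Sum.elim p y) (E2 ab) =
        (∑ t, y (Sum.inr (ab.1, ab.2, t)) *
          (y (Sum.inl (ab.1, t)) - y (Sum.inl (ab.2, t)))) - 1 := by
      intro y ab
      simp [E2]
    rw [natCast_le_encard_iff]
    constructor
    · rintro ⟨y, hy⟩
      refine ⟨fun a t => y (Sum.inl (a, t)), fun a b hab => ?_, fun a e => ?_⟩
      · by_contra hne
        have h3 := hy (E2 (a, b)) (Or.inr ⟨(a, b), hne, rfl⟩)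
        rw [h2] at h3
        have h4 : ∀ t, y (Sum.inl (a, t)) = y (Sum.inl (b, t)) := fun t => congrFun hab t
        simp [h4] at h3
      · rw [← h1 y (a, e)]
        exact hy _ (Or.inl ⟨_, rfl⟩)
    · rintro ⟨Y, hY, hm⟩
      classical
      have h3 : ∀ a b, ∃ z : τ → ℂ, a ≠ b → ∑ t, z t * (Y a t - Y b t) = 1 := by
        intro a b
        by_cases hab : a = b
        · exact ⟨0, fun h => absurd hab h⟩
        · obtain ⟨t, ht⟩ := Function.ne_iff.1 (hY.ne hab)
          refine ⟨Pi.single t (Y a t - Y b t)⁻¹, fun _ => ?_⟩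
          rw [Finset.sum_eq_single t]
          · simp [inv_mul_cancel₀ (sub_ne_zero.2 ht)]
          · intro s _ hs
            simp [Pi.single_eq_of_ne hs]
          · simp
      choose z hz using h3
      refine ⟨Sum.elim (fun at' => Y at'.1 at'.2) fun abt => z abt.1 abt.2.1 abt.2.2, ?_⟩
      rintro Q (⟨ae, rfl⟩ | ⟨ab, hab, rfl⟩)
      · rw [h1]
        exact hm ae.1 ae.2
      · rw [h2]
        simp only [Sum.elim_inl, Sum.elim_inr]
        rw [hz _ _ hab, sub_self]
  obtain ⟨G, hG, h⟩ := elim_dichotomy (Set.range E1 ∪ E2 '' {ab | ab.1 ≠ ab.2})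
  simp only [key] at h
  exact ⟨G, hG, h⟩

/-- A number of solutions attained on a Euclidean open set is the generic number of solutions. -/
theorem generic_count (P : τ → MvPolynomial (σ ⊕ τ) ℤ) (p₁ : σ → ℂ) (N : ℕ)
    (h : ∀ᶠ p in 𝓝 p₁, (Sol P p).encard = N) :
    ∃ G : MvPolynomial σ ℂ, G ≠ 0 ∧ ∀ p, eval p G ≠ 0 → (Sol P p).encard = N := by
  obtain ⟨G, hG, h1⟩ := le_encard_dichotomy P N
  obtain ⟨G', hG', h2⟩ := le_encard_dichotomy P (N + 1)
  obtain ⟨p, hp, hpN⟩ := ((frequently_eval_ne_zero p₁ G hG).and_eventually h).exists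
  obtain ⟨p', hp', hpN'⟩ := ((frequently_eval_ne_zero p₁ G' hG').and_eventually h).exists
  have h1' := h1.resolve_right fun h => h p hp hpN.ge
  have hlt : ¬ ((N + 1 : ℕ) : ℕ∞) ≤ (N : ℕ∞) := by
    rw [Nat.cast_le]; omega
  have h2' := h2.resolve_left fun h => hlt (hpN' ▸ h p' hp')
  refine ⟨G * G', mul_ne_zero hG hG', fun q hq => ?_⟩
  rw [map_mul] at hq
  refine le_antisymm ?_ (h1' q (left_ne_zero_of_mul hq))
  have h3 := h2' q (right_ne_zero_of_mul hq)
  rw [not_le, Nat.cast_add, Nat.cast_one] at h3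
  exact Order.le_of_lt_add_one h3
end

/-! ### The universal ML system and its nondegeneracy -/

/-- Differentiating `P (p, y) = 0` along a derivation dual to the parameter `p s` shows that the
column `∂P/∂p_s` lies in the image of the Jacobian. So a left kernel vector of the Jacobian kills
this column. -/
theorem vecMul_param_eq_zero {σ τ : Type} [Fintype σ] [Fintype τ]
    (P : τ → MvPolynomial (σ ⊕ τ) ℤ) (p : σ → ℂ) (y : τ → ℂ) (hy : y ∈ Sol P p)
    (ρ : τ → ℂ) (hρ : Matrix.vecMul ρ (Jac P p y) = 0) (s : σ) (D : Derivation ℤ ℂ ℂ)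
    (hs : D (p s) = 1) (hs' : ∀ s' ≠ s, D (p s') = 0) :
    ∑ e, ρ e * aeval (Sum.elim p y) (pderiv (Sum.inl s) (P e)) = 0 := by
  have h1 : ∀ e, aeval (Sum.elim p y) (pderiv (Sum.inl s) (P e)) +
      ∑ t, Jac P p y e t * D (y t) = 0 := by
    intro e
    have h := derivation_aeval D (Sum.elim p y) (P e)
    rw [hy e, map_zero, Fintype.sum_sum_type, Finset.sum_eq_single s] at h
    · simpa [hs, Jac] using h.symm
    · intro s' _ hne
      simp [hs' s' hne]
    · simp
  have h2 : ∑ e, ρ e * ∑ t, Jac P p y e t * D (y t) = 0 := by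
    simp only [Finset.mul_sum]
    rw [Finset.sum_comm]
    refine Finset.sum_eq_zero fun t _ => ?_
    have h := congrFun hρ t
    simp only [Matrix.vecMul, dotProduct, Pi.zero_apply] at h
    simp only [← mul_assoc, ← Finset.sum_mul, h, zero_mul]
  calc _ = ∑ e, ρ e * (aeval (Sum.elim p y) (pderiv (Sum.inl s) (P e)) +
      ∑ t, Jac P p y e t * D (y t)) := by
        simp only [mul_add, Finset.sum_add_distrib, h2, add_zero]
    _ = 0 := by simp [h1]

/-- The monomial `x ^ d`. -/
def mono {n : ℕ} (x : Fin n → ℂ) (d : Fin n → ℕ) : ℂ := ∏ l, x l ^ d l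

theorem mono_ne_zero {n : ℕ} {x : Fin n → ℂ} (hx : ∀ l, x l ≠ 0) (d : Fin n → ℕ) :
    mono x d ≠ 0 := Finset.prod_ne_zero_iff.2 fun l _ => pow_ne_zero _ (hx l)

theorem pderiv_prod_unknown {σ : Type} {n k : ℕ} (s : σ) (d : Fin n → ℕ) :
    pderiv (Sum.inl s) (∏ l, X (Sum.inr (Sum.inl l)) ^ d l :
      MvPolynomial (σ ⊕ (Fin n ⊕ Fin k)) ℤ) = 0 := by
  refine Finset.prod_induction _ (fun q => pderiv (Sum.inl s) q = 0) ?_ ?_ ?_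
  · intro a b ha hb
    simp [ha, hb]
  · simp
  · intro l _
    simp

section
variable {I : Type} [Fintype I] {n k : ℕ} (deg : I → Fin n → ℕ) (blk : I → Fin k)

/-- The universal ML system with terms indexed by `I`, the term `i` having exponent `deg i` and
belonging to the polynomial `blk i`. The parameters are the coefficients (`I`) and the data
(`Fin n`); the unknowns are the variables `x` (`Fin n`) and the multipliers `λ` (`Fin k`). -/
noncomputable def mlP : Fin n ⊕ Fin k → MvPolynomial ((I ⊕ Fin n) ⊕ (Fin n ⊕ Fin k)) ℤ
  | Sum.inl l => X (Sum.inl (Sum.inr l)) - ∑ i, C (deg i l : ℤ) * X (Sum.inr (Sum.inr (blk i))) *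
      X (Sum.inl (Sum.inl i)) * ∏ l', X (Sum.inr (Sum.inl l')) ^ deg i l'
  | Sum.inr j => ∑ i with blk i = j,
      X (Sum.inl (Sum.inl i)) * ∏ l', X (Sum.inr (Sum.inl l')) ^ deg i l'

theorem mem_Sol_mlP (p : I ⊕ Fin n → ℂ) (y : Fin n ⊕ Fin k → ℂ) :
    y ∈ Sol (mlP deg blk) p ↔
      (∀ l, p (Sum.inr l) = ∑ i, (deg i l : ℂ) * y (Sum.inr (blk i)) * p (Sum.inl i) *
        mono (fun l => y (Sum.inl l)) (deg i)) ∧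
      ∀ j, ∑ i with blk i = j, p (Sum.inl i) * mono (fun l => y (Sum.inl l)) (deg i) = 0 := by
  simp only [Sol, Set.mem_ofPred_eq, Sum.forall]
  refine and_congr (forall_congr' fun l => ?_) (forall_congr' fun j => ?_)
  · simp [mlP, mono]
    exact sub_eq_zero
  · simp [mlP, mono]

/-- A parameter `p` of the universal ML system at which exactly the terms in `T` are present, with
coefficients that are algebraically independent together with the data, while `T` has the same
Newton polytopes as the full set of terms. -/
structure Rich (T : Set I) (p : I ⊕ Fin n → ℂ) : Prop where
  /-- The coefficients outside `T` vanish. -/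
  zero : ∀ i ∉ T, p (Sum.inl i) = 0
  /-- Each coefficient in `T` has a dual derivation. -/
  richC : ∀ i ∈ T, ∃ D : Derivation ℤ ℂ ℂ, D (p (Sum.inl i)) = 1 ∧
    ∀ s ≠ Sum.inl i, D (p s) = 0
  /-- Each datum has a dual derivation. -/
  richU : ∀ l, ∃ D : Derivation ℤ ℂ ℂ, D (p (Sum.inr l)) = 1 ∧
    ∀ s ≠ Sum.inr l, D (p s) = 0
  /-- Every polynomial of the system has a term in `T`. -/
  meets : ∀ j, ∃ i ∈ T, blk i = j
  /-- Every linear functional is maximized, over the terms of one polynomial, at a term in `T`. -/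
  hull : ∀ (w : Fin n → ℝ) (i : I), ∃ i' ∈ T, blk i' = blk i ∧
    ∑ l, w l * deg i l ≤ ∑ l, w l * deg i' l

variable {deg blk} {T : Set I} {p : I ⊕ Fin n → ℂ}

omit [Fintype I] in
theorem Rich.u_ne_zero (h : Rich deg blk T p) (l : Fin n) : p (Sum.inr l) ≠ 0 := by
  obtain ⟨D, hD, -⟩ := h.richU l
  intro h0
  simp [h0] at hD

/-- The equation `u_l = x_l * (⋯)` forces `x_l ≠ 0` as soon as `u_l ≠ 0`. -/
theorem x_ne_zero_of_mem_Sol {y : Fin n ⊕ Fin k → ℂ} (hy : y ∈ Sol (mlP deg blk) p) (l : Fin n)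
    (hl : p (Sum.inr l) ≠ 0) : y (Sum.inl l) ≠ 0 := by
  intro h0
  refine hl ?_
  rw [((mem_Sol_mlP deg blk p y).1 hy).1 l]
  refine Finset.sum_eq_zero fun i _ => ?_
  by_cases hd : deg i l = 0
  · simp [hd]
  · have : mono (fun l => y (Sum.inl l)) (deg i) = 0 :=
      Finset.prod_eq_zero (Finset.mem_univ l) (by simp [h0, hd])
    simp [this]

/-- At a rich parameter all solutions are nondegenerate. A left kernel vector `ρ` of the Jacobian
is orthogonal to all columns `∂P/∂p_s` with `p_s` free. The columns of the data give `ρ = 0` on the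
equations `ℓ_l`; then the column of one coefficient of each polynomial `f_j`, whose entry there is a
monomial in `x` and so nonzero, gives `ρ = 0` on `f_j`. -/
theorem Rich.det_jac_ne_zero (h : Rich deg blk T p) (y : Fin n ⊕ Fin k → ℂ)
    (hy : y ∈ Sol (mlP deg blk) p) : (Jac (mlP deg blk) p y).det ≠ 0 := by
  classical
  intro h0
  obtain ⟨ρ, hρ0, hρ⟩ := Matrix.exists_vecMul_eq_zero_iff.2 h0
  have hl : ∀ l, ρ (Sum.inl l) = 0 := by
    intro l
    obtain ⟨D, hD, hD'⟩ := h.richU l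
    have h1 := vecMul_param_eq_zero _ p y hy ρ hρ (Sum.inr l) D hD hD'
    simpa [Fintype.sum_sum_type, mlP, pderiv_X, Pi.single_apply, pderiv_prod_unknown] using h1
  have hj : ∀ j, ρ (Sum.inr j) = 0 := by
    intro j
    obtain ⟨i, hi, rfl⟩ := h.meets j
    obtain ⟨D, hD, hD'⟩ := h.richC i hi
    have h1 := vecMul_param_eq_zero _ p y hy ρ hρ (Sum.inl i) D hD hD'
    have h2 : mono (fun l => y (Sum.inl l)) (deg i) ≠ 0 :=
      mono_ne_zero (fun l => x_ne_zero_of_mem_Sol hy l (h.u_ne_zero l)) _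
    simp [Fintype.sum_sum_type, mlP, pderiv_X, Pi.single_apply, hl, pderiv_prod_unknown,
      apply_ite] at h1
    exact h1.resolve_right h2
  refine hρ0 (funext fun e => ?_)
  rcases e with l | j
  · exact hl l
  · exact hj j
end

/-! ### Limits of monomials along ultrafilters -/

theorem exists_tendsto_of_bdd {ι E : Type} [NormedAddCommGroup E] [ProperSpace E]
    (U : Ultrafilter ι) (f : ι → E) (C : ℝ) (h : ∀ᶠ s in (U : Filter ι), ‖f s‖ ≤ C) :
    ∃ a, Tendsto f U (𝓝 a) := by
  obtain ⟨a, -, ha⟩ := (isCompact_closedBall (0 : E) C).ultrafilter_le_nhds' (U.map f)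
    (h.mono fun s hs => mem_closedBall_zero_iff.2 hs)
  exact ⟨a, ha⟩

theorem tendsto_or_norm_atTop {ι E : Type} [NormedAddCommGroup E] [ProperSpace E]
    (U : Ultrafilter ι) (f : ι → E) :
    (∃ a, Tendsto f U (𝓝 a)) ∨ Tendsto (fun s => ‖f s‖) U atTop := by
  by_cases h : ∃ C, ∀ᶠ s in (U : Filter ι), ‖f s‖ ≤ C
  · obtain ⟨C, hC⟩ := h
    exact Or.inl (exists_tendsto_of_bdd U f C hC)
  · push Not at h
    refine Or.inr (tendsto_atTop.2 fun C => ?_)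
    filter_upwards [h C] with s hs
    exact hs.le

theorem exists_tendsto_normalize {ι E : Type} [NormedAddCommGroup E] [NormedSpace ℝ E]
    [ProperSpace E] (U : Ultrafilter ι) (f : ι → E) (h : Tendsto (fun s => ‖f s‖) U atTop) :
    ∃ a, a ≠ 0 ∧ Tendsto (fun s => ‖f s‖⁻¹ • f s) U (𝓝 a) := by
  have h1 : ∀ᶠ s in (U : Filter ι), ‖‖f s‖⁻¹ • f s‖ = 1 := by
    filter_upwards [h.eventually_gt_atTop 0] with s hs
    rw [norm_smul, norm_inv, norm_norm, inv_mul_cancel₀ hs.ne']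
  obtain ⟨a, ha⟩ := exists_tendsto_of_bdd U _ 1 (h1.mono fun s hs => hs.le)
  refine ⟨a, ?_, ha⟩
  rintro rfl
  have h2 := tendsto_nhds_unique ha.norm (tendsto_const_nhds.congr' (h1.mono fun s hs => hs.symm))
  simp at h2

/-- An ultrafilter restricts to any of its members. -/
theorem exists_restrict {ι : Type} (U : Ultrafilter ι) (Q : ι → Prop)
    (hQ : ∀ᶠ s in (U : Filter ι), Q s) :
    ∃ V : Ultrafilter {s // Q s}, map Subtype.val (V : Filter {s // Q s}) = U := by
  have h : Set.range (Subtype.val : {s // Q s} → ι) ∈ U := by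
    rw [Subtype.range_coe_subtype]; exact hQ
  refine ⟨U.comap Subtype.val_injective h, ?_⟩
  rw [Ultrafilter.coe_comap]
  exact map_comap_of_mem h

theorem exists_eventually_eq {ι α : Type} [Finite α] (U : Ultrafilter ι) (f : ι → α) :
    ∃ a, ∀ᶠ s in (U : Filter ι), f s = a := by
  obtain ⟨a, ha⟩ := Ultrafilter.eq_pure_of_finite (U.map f)
  refine ⟨a, ?_⟩
  have : ({a} : Set α) ∈ U.map f := by rw [ha]; exact Ultrafilter.mem_pure.2 rfl
  exact this

theorem log_norm_mono {n : ℕ} {x : Fin n → ℂ} (hx : ∀ l, x l ≠ 0) (d : Fin n → ℕ) :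
    Real.log ‖mono x d‖ = ∑ l, Real.log ‖x l‖ * d l := by
  rw [mono, norm_prod, Real.log_prod fun l _ => norm_ne_zero_iff.2 (pow_ne_zero _ (hx l))]
  refine Finset.sum_congr rfl fun l _ => ?_
  rw [norm_pow, Real.log_pow, mul_comm]

theorem mono_mul {n : ℕ} (x y : Fin n → ℂ) (d : Fin n → ℕ) :
    mono (fun l => x l * y l) d = mono x d * mono y d := by
  simp [mono, mul_pow, Finset.prod_mul_distrib]

theorem continuous_mono {n : ℕ} (d : Fin n → ℕ) : Continuous fun x : Fin n → ℂ => mono x d := by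
  unfold mono; fun_prop

theorem derivation_mono {n : ℕ} (D : Derivation ℤ ℂ ℂ) {x : Fin n → ℂ} (hx : ∀ l, x l ≠ 0)
    (d : Fin n → ℕ) : D (mono x d) = mono x d * ∑ l, d l * (D (x l) / x l) := by
  have h : ∀ S : Finset (Fin n), D (∏ l ∈ S, x l ^ d l) =
      (∏ l ∈ S, x l ^ d l) * ∑ l ∈ S, d l * (D (x l) / x l) := by
    intro S
    classical
    induction S using Finset.induction_on with
    | empty => simp
    | insert a S ha ih =>
      have h1 : D (x a ^ d a) = x a ^ d a * (d a * (D (x a) / x a)) := by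
        rw [Derivation.leibniz_pow]
        rcases Nat.eq_zero_or_pos (d a) with h0 | h0
        · simp [h0]
        · obtain ⟨e, he⟩ := Nat.exists_eq_succ_of_ne_zero h0.ne'
          have := hx a
          rw [he]
          simp only [Nat.succ_eq_add_one, Nat.add_sub_cancel, nsmul_eq_mul, smul_eq_mul]
          field_simp
          ring
      rw [Finset.prod_insert ha, Finset.sum_insert ha, Derivation.leibniz, ih, h1]
      simp only [smul_eq_mul]
      ring
  exact h Finset.univ

/-- The tuple of phases `x_l / |x_l|`; the value is `0` where `x_l = 0`. -/
noncomputable def phase {n : ℕ} (x : Fin n → ℂ) : Fin n → ℂ := fun l => x l / (‖x l‖ : ℂ)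

theorem phase_mul {n : ℕ} {x : Fin n → ℂ} (hx : ∀ l, x l ≠ 0) (l : Fin n) :
    x l = Complex.exp (Real.log ‖x l‖) * phase x l := by
  have h : ‖x l‖ ≠ 0 := norm_ne_zero_iff.2 (hx l)
  rw [← Complex.ofReal_exp, Real.exp_log (norm_pos_iff.2 (hx l)), phase]
  have : (‖x l‖ : ℂ) ≠ 0 := Complex.ofReal_ne_zero.2 h
  field_simp

theorem mono_eq_norm_mul {n : ℕ} {x : Fin n → ℂ} (hx : ∀ l, x l ≠ 0) (d : Fin n → ℕ) :
    mono x d = ‖mono x d‖ * mono (phase x) d := by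
  have h : ∀ l, ‖x l‖ ≠ 0 := fun l => norm_ne_zero_iff.2 (hx l)
  have h1 : (‖mono x d‖ : ℂ) = mono (fun l => (‖x l‖ : ℂ)) d := by
    simp [mono]
  rw [h1, ← mono_mul]
  congr 1
  ext l
  have : (‖x l‖ : ℂ) ≠ 0 := Complex.ofReal_ne_zero.2 (h l)
  rw [phase]; field_simp

theorem exists_tendsto_phase {n : ℕ} {ι : Type} (U : Ultrafilter ι) (x : ι → Fin n → ℂ)
    (hx : ∀ s l, x s l ≠ 0) :
    ∃ θ : Fin n → ℂ, (∀ l, θ l ≠ 0) ∧ Tendsto (fun s => phase (x s)) U (𝓝 θ) := by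
  have h1 : ∀ s l, ‖phase (x s) l‖ = 1 := by
    intro s l
    have := norm_ne_zero_iff.2 (hx s l)
    rw [phase, norm_div, Complex.norm_real, norm_norm, div_self this]
  obtain ⟨θ, hθ⟩ := exists_tendsto_of_bdd U (fun s => phase (x s)) 1
    (Eventually.of_forall fun s => (pi_norm_le_iff_of_nonneg zero_le_one).2 fun l => (h1 s l).le)
  refine ⟨θ, fun l h0 => ?_, hθ⟩
  have h2 := ((tendsto_pi_nhds.1 hθ) l).norm
  simp only [h1, h0, norm_zero] at h2
  exact one_ne_zero (tendsto_nhds_unique tendsto_const_nhds h2)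

section
variable {I : Type} {n k : ℕ} {deg : I → Fin n → ℕ} {blk : I → Fin k}
  {ι : Type} (U : Ultrafilter ι) (x : ι → Fin n → ℂ) (hx : ∀ s l, x s l ≠ 0)
  (m : Fin k → I) (χ : I → ℂ)
  (hχ : ∀ i, Tendsto (fun s => mono (x s) (deg i) / mono (x s) (deg (m (blk i)))) U (𝓝 (χ i)))

include hx hχ in
theorem tendsto_log_ratio (i : I) (hi : χ i ≠ 0) :
    Tendsto (fun s => ∑ l, Real.log ‖x s l‖ * ((deg i l : ℝ) - deg (m (blk i)) l)) U
      (𝓝 (Real.log ‖χ i‖)) := by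
  refine ((hχ i).norm.log (norm_ne_zero_iff.2 hi)).congr fun s => ?_
  rw [norm_div, Real.log_div (norm_ne_zero_iff.2 (mono_ne_zero (hx s) _))
    (norm_ne_zero_iff.2 (mono_ne_zero (hx s) _)), log_norm_mono (hx s), log_norm_mono (hx s),
    ← Finset.sum_sub_distrib]
  simp only [mul_sub]

include hx hχ in
/-- Limits of ratios of monomials are, as far as they are nonzero, ratios of monomials at one point
`ξ` of the torus. The phases of `ξ` are the limits of the phases of `x s`. Its moduli solve a linear
system for their logarithms: the logarithms of `|χ i|` are a limit of vectors in the range of a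
linear map, and such a range is closed. -/
theorem exists_torus_point [Fintype I] : ∃ ξ : Fin n → ℂ, (∀ l, ξ l ≠ 0) ∧
    ∀ i, χ i ≠ 0 → mono ξ (deg i) = χ i * mono ξ (deg (m (blk i))) := by
  obtain ⟨θ, hθ0, hθ⟩ := exists_tendsto_phase U x hx
  let A : (Fin n → ℝ) →ₗ[ℝ] ({i // χ i ≠ 0} → ℝ) := LinearMap.pi fun i =>
    ∑ l, ((deg i.1 l : ℝ) - deg (m (blk i.1)) l) • LinearMap.proj l
  have hA : ∀ w i, A w i = ∑ l, w l * ((deg i.1 l : ℝ) - deg (m (blk i.1)) l) := by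
    intro w i
    simp [A, mul_comm]
  have hclosed : IsClosed (LinearMap.range A : Set ({i // χ i ≠ 0} → ℝ)) :=
    Submodule.closed_of_finiteDimensional _
  have hb : (fun i : {i // χ i ≠ 0} => Real.log ‖χ i.1‖) ∈
      (LinearMap.range A : Set ({i // χ i ≠ 0} → ℝ)) := by
    refine hclosed.mem_of_tendsto (f := fun s => A fun l => Real.log ‖x s l‖) (b := (U : Filter ι))
      ?_ (Eventually.of_forall fun s => ⟨_, rfl⟩)
    rw [tendsto_pi_nhds]
    intro i
    simp only [hA]
    exact tendsto_log_ratio U x hx m χ hχ i.1 i.2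
  obtain ⟨w, hw⟩ := hb
  have hξ : ∀ d, mono (fun l => Complex.exp (w l) * θ l) d =
      Complex.exp ((∑ l, w l * d l : ℝ) : ℂ) * mono θ d := by
    intro d
    rw [mono_mul]
    congr 1
    rw [mono, Complex.ofReal_sum, Complex.exp_sum]
    refine Finset.prod_congr rfl fun l _ => ?_
    rw [← Complex.exp_nat_mul]
    push_cast
    rw [mul_comm]
  refine ⟨fun l => Complex.exp (w l) * θ l, fun l => mul_ne_zero (Complex.exp_ne_zero _) (hθ0 l),
    fun i hi => ?_⟩
  have h1 : χ i = ‖χ i‖ * (mono θ (deg i) / mono θ (deg (m (blk i)))) := by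
    have h2 : Tendsto (fun s => ((‖mono (x s) (deg i) / mono (x s) (deg (m (blk i)))‖ : ℝ) : ℂ) *
        (mono (phase (x s)) (deg i) / mono (phase (x s)) (deg (m (blk i))))) U
        (𝓝 (‖χ i‖ * (mono θ (deg i) / mono θ (deg (m (blk i)))))) := by
      refine Tendsto.mul ((Complex.continuous_ofReal.tendsto _).comp (hχ i).norm) ?_
      exact (((continuous_mono _).tendsto θ).comp hθ).div (((continuous_mono _).tendsto θ).comp hθ)
        (mono_ne_zero hθ0 _)
    refine tendsto_nhds_unique (hχ i) (h2.congr fun s => ?_)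
    conv_rhs => rw [mono_eq_norm_mul (hx s) (deg i), mono_eq_norm_mul (hx s) (deg (m (blk i)))]
    rw [norm_div]
    push_cast
    rw [div_mul_div_comm]
  have h3 : Real.exp (∑ l, w l * deg i l) =
      ‖χ i‖ * Real.exp (∑ l, w l * deg (m (blk i)) l) := by
    have h4 := congrFun hw ⟨i, hi⟩
    rw [hA] at h4
    simp only [mul_sub, Finset.sum_sub_distrib] at h4
    rw [← Real.exp_log (norm_pos_iff.2 hi), ← h4, ← Real.exp_add]
    congr 1; ring
  rw [hξ, hξ, ← Complex.ofReal_exp, ← Complex.ofReal_exp, h3, h1]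
  have h5 := mono_ne_zero hθ0 (deg (m (blk i)))
  rw [← h1]
  push_cast
  conv_rhs => rw [h1]
  field_simp
end

/-! ### Obstructions at algebraically independent parameters -/

section
variable {I : Type} [Fintype I] {n k : ℕ} {deg : I → Fin n → ℕ} {blk : I → Fin k}

omit [Fintype I] in
/-- The logarithmic derivative of `χ = ξ ^ d / ξ ^ e`. For `χ = 0` nothing is assumed, and both
sides vanish. -/
theorem derivation_ratio (D : Derivation ℤ ℂ ℂ) {ξ : Fin n → ℂ} (hξ : ∀ l, ξ l ≠ 0)
    {χ : ℂ} {d e : Fin n → ℕ} (h : χ ≠ 0 → mono ξ d = χ * mono ξ e) :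
    D χ = χ * (∑ l, d l * (D (ξ l) / ξ l) - ∑ l, e l * (D (ξ l) / ξ l)) := by
  by_cases h0 : χ = 0
  · simp [h0]
  · have h1 := h h0
    have h2 := congrArg D h1
    rw [Derivation.leibniz, derivation_mono D hξ, derivation_mono D hξ, h1, smul_eq_mul,
      smul_eq_mul] at h2
    have h3 := mono_ne_zero hξ e
    refine mul_left_cancel₀ h3 ?_
    linear_combination -h2

/-- At algebraically independent coefficients the face system has no critical points: if
`ξ` solves the polynomials `f_j = ∑ c_i χ_i` (normalized by the monomial `m j`) of a face and the
multipliers `ν` make all logarithmic derivatives of `∑ ν_j f_j` vanish, then `ν = 0`. Apply to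
`∑ ν_j f_j = 0` the derivation dual to the coefficient `c (m j)`: the terms coming from the
derivative of `ξ` vanish by criticality, and `ν j` is left. -/
theorem critical_torus_point_contra (c : I → ℂ) (m : Fin k → I) (χ : I → ℂ)
    (hχm : ∀ j, χ (m j) = 1) (hm : ∀ j, blk (m j) = j) {ξ : Fin n → ℂ} (hξ : ∀ l, ξ l ≠ 0)
    (hmono : ∀ i, χ i ≠ 0 → mono ξ (deg i) = χ i * mono ξ (deg (m (blk i))))
    (h1 : ∀ j, ∑ i with blk i = j, c i * χ i = 0) (ν : Fin k → ℂ)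
    (h2 : ∀ l, ∑ i, (deg i l : ℂ) * ν (blk i) * c i * χ i = 0) (j : Fin k)
    (D : Derivation ℤ ℂ ℂ) (hD : D (c (m j)) = 1) (hD' : ∀ i ≠ m j, D (c i) = 0) : ν j = 0 := by
  classical
  let δ : Fin n → ℂ := fun l => D (ξ l) / ξ l
  have hsum : ∀ F : I → ℂ, ∑ i, ν (blk i) * F i = ∑ j', ν j' * ∑ i with blk i = j', F i := by
    intro F
    rw [← Finset.sum_fiberwise (s := Finset.univ) (g := blk)]
    refine Finset.sum_congr rfl fun j' _ => ?_
    rw [Finset.mul_sum]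
    refine Finset.sum_congr rfl fun i hi => ?_
    rw [(Finset.mem_filter.1 hi).2]
  have h3 : ∑ i, ν (blk i) * (χ i * D (c i)) +
      ∑ i, ν (blk i) * (c i * (χ i * (∑ l, deg i l * δ l - ∑ l, deg (m (blk i)) l * δ l))) = 0 := by
    rw [← Finset.sum_add_distrib]
    calc _ = ∑ i, ν (blk i) * D (c i * χ i) := by
          refine Finset.sum_congr rfl fun i _ => ?_
          rw [Derivation.leibniz, derivation_ratio D hξ (hmono i)]
          simp only [smul_eq_mul, δ]
          ring
      _ = 0 := by
          rw [hsum]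
          simp only [← map_sum, h1, map_zero, mul_zero, Finset.sum_const_zero]
  have h4 : ∑ i, ν (blk i) * (χ i * D (c i)) = ν j := by
    rw [Finset.sum_eq_single (m j)]
    · simp [hχm, hm, hD]
    · intro i _ hi
      simp [hD' i hi]
    · simp
  have h5 : ∑ i, ν (blk i) * (c i * (χ i * ∑ l, deg (m (blk i)) l * δ l)) = 0 := by
    rw [hsum]
    refine Finset.sum_eq_zero fun j' _ => ?_
    have : ∑ i with blk i = j', c i * (χ i * ∑ l, deg (m (blk i)) l * δ l) =
        (∑ i with blk i = j', c i * χ i) * ∑ l, deg (m j') l * δ l := by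
      rw [Finset.sum_mul]
      refine Finset.sum_congr rfl fun i hi => ?_
      rw [(Finset.mem_filter.1 hi).2, mul_assoc]
    rw [this, h1, zero_mul, mul_zero]
  have h6 : ∑ i, ν (blk i) * (c i * (χ i * ∑ l, deg i l * δ l)) = 0 := by
    calc _ = ∑ l, δ l * ∑ i, (deg i l : ℂ) * ν (blk i) * c i * χ i := by
          simp only [Finset.mul_sum]
          rw [Finset.sum_comm]
          refine Finset.sum_congr rfl fun l _ => Finset.sum_congr rfl fun i _ => ?_
          ring
      _ = 0 := by simp [h2]
  simp only [mul_sub, Finset.sum_sub_distrib, h4, h5, h6] at h3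
  simpa using h3

/-- If `u = ∑ b_i v_i` with integer vectors `v_i`, and all `v_i` with `b_i ≠ 0` lie in a real
hyperplane `ω^⊥`, then these `v_i` lie in a rational hyperplane, so `u` satisfies a rational linear
relation. That is impossible when each coordinate of `u` has a dual derivation. -/
theorem rational_span_contra (v : I → Fin n → ℤ) (b : I → ℂ) (u : Fin n → ℂ)
    (hu : ∀ l, u l = ∑ i, b i * v i l)
    (ω : Fin n → ℝ) (hω : ω ≠ 0) (hvω : ∀ i, b i ≠ 0 → ∑ l, ω l * v i l = 0)
    (hD : ∀ l, ∃ D : Derivation ℤ ℂ ℂ, D (u l) = 1 ∧ ∀ l' ≠ l, D (u l') = 0) : False := by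
  classical
  let W : Submodule ℚ (Fin n → ℚ) :=
    Submodule.span ℚ {q | ∃ i, b i ≠ 0 ∧ q = fun l => (v i l : ℚ)}
  have hWω : ∀ q ∈ W, ∑ l, ω l * (q l : ℝ) = 0 := by
    intro q hq
    induction hq using Submodule.span_induction with
    | mem q hq =>
      obtain ⟨i, hi, rfl⟩ := hq
      simpa using hvω i hi
    | zero => simp
    | add q r _ _ hq hr =>
      simp only [Pi.add_apply, Rat.cast_add, mul_add, Finset.sum_add_distrib, hq, hr, add_zero]
    | smul a q _ hq =>
      calc _ = (a : ℝ) * ∑ l, ω l * (q l : ℝ) := by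
            rw [Finset.mul_sum]
            refine Finset.sum_congr rfl fun l _ => ?_
            simp only [Pi.smul_apply, smul_eq_mul, Rat.cast_mul]
            ring
        _ = 0 := by rw [hq, mul_zero]
  -- `W = ⊤` would put the standard basis vectors into `ω^⊥`
  have hW : W < ⊤ := by
    rw [lt_top_iff_ne_top]
    intro htop
    refine hω (funext fun l => ?_)
    have h := hWω (Pi.single l 1) (htop ▸ Submodule.mem_top)
    rw [Finset.sum_eq_single l] at h
    · simpa using h
    · intro l' _ hl'
      simp [Pi.single_eq_of_ne hl']
    · simp
  obtain ⟨f, hf0, hf⟩ := Submodule.exists_le_ker_of_lt_top W hW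
  let ψ : Fin n → ℚ := fun l => f (Pi.single l 1)
  have hfψ : ∀ q, f q = ∑ l, q l * ψ l := by
    intro q
    conv_lhs => rw [pi_eq_sum_univ' q]
    simp only [map_sum, map_smul, smul_eq_mul, ψ]
  have hψu : ∑ l, ψ l • u l = 0 := by
    calc _ = ∑ i, b i * ((∑ l, (v i l : ℚ) * ψ l : ℚ) : ℂ) := by
          push_cast
          simp only [hu, Finset.smul_sum, Finset.mul_sum]
          rw [Finset.sum_comm]
          refine Finset.sum_congr rfl fun i _ => Finset.sum_congr rfl fun l _ => ?_
          rw [Rat.smul_def]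
          ring
      _ = 0 := by
          refine Finset.sum_eq_zero fun i _ => ?_
          by_cases hi : b i = 0
          · simp [hi]
          · have : f (fun l => (v i l : ℚ)) = 0 := hf (Submodule.subset_span ⟨i, hi, rfl⟩)
            rw [← hfψ, this, Rat.cast_zero, mul_zero]
  have hψ : ∀ l, ψ l = 0 := by
    intro l
    obtain ⟨D, h1, h2⟩ := hD l
    have h := congrArg D hψu
    rw [map_sum, map_zero, Finset.sum_eq_single l] at h
    · rw [map_rat_smul D, h1] at h
      simpa [Rat.smul_def] using h
    · intro l' _ hl'
      rw [map_rat_smul D, h2 l' hl', smul_zero]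
    · simp
  refine hf0 (LinearMap.ext fun q => ?_)
  rw [hfψ]
  simp [hψ]

omit [Fintype I] in
/-- By the condition on Newton polytopes, at each point of the torus the largest monomial of each
polynomial may be chosen in `T`. -/
theorem Rich.exists_max [Finite I] {T : Set I} {p₁ : I ⊕ Fin n → ℂ} (h : Rich deg blk T p₁)
    {x : Fin n → ℂ} (hx : ∀ l, x l ≠ 0) :
    ∃ m : Fin k → I, (∀ j, m j ∈ T ∧ blk (m j) = j) ∧
      ∀ i, ‖mono x (deg i)‖ ≤ ‖mono x (deg (m (blk i)))‖ := by
  have h1 : ∀ j, ∃ i, (i ∈ T ∧ blk i = j) ∧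
      ∀ i', (i' ∈ T ∧ blk i' = j) → ‖mono x (deg i')‖ ≤ ‖mono x (deg i)‖ := fun j =>
    Set.exists_max_image {i | i ∈ T ∧ blk i = j} (fun i => ‖mono x (deg i)‖) (Set.toFinite _)
      (h.meets j)
  choose m hm hmax using h1
  refine ⟨m, hm, fun i => ?_⟩
  obtain ⟨i', hi', hb, hle⟩ := h.hull (fun l => Real.log ‖x l‖) i
  rw [← log_norm_mono hx, ← log_norm_mono hx] at hle
  refine le_trans ?_ (hmax (blk i) i' ⟨hi', hb⟩)
  exact (Real.log_le_log_iff (norm_pos_iff.2 (mono_ne_zero hx _))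
    (norm_pos_iff.2 (mono_ne_zero hx _))).1 hle
end

/-! ### Solutions do not escape to infinity -/

section
variable {I : Type} [Fintype I] {n k : ℕ} {deg : I → Fin n → ℕ} {blk : I → Fin k}

/-- Solutions do not escape near a rich parameter, under the additional assumptions that all points
lie in the torus and that `m j` indexes the largest monomial of the polynomial `j` throughout.

With `r i` the ratio of the monomial `i` to the largest one of its polynomial, and
`μ j = λ j * x ^ deg (m j)`, the system becomes `∑ c_i r_i = 0` for each polynomial together with
`u_l = ∑ deg i l * μ (blk i) * c_i * r_i`. The ratios are bounded by `1` and converge to some `χ`.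
If `μ` were unbounded, its limiting direction `ν` would be critical for the limit system, against
`critical_torus_point_contra`. If `log |x|` were unbounded, its limiting direction `ω` would be
orthogonal to all exponent differences surviving in the limit of the second family of equations,
against `rational_span_contra`. So `x` and `λ` converge. -/
theorem Rich.proper_aux {T : Set I} {p₁ : I ⊕ Fin n → ℂ} (h : Rich deg blk T p₁)
    {ι : Type} (U : Ultrafilter ι) (p : ι → I ⊕ Fin n → ℂ) (y : ι → Fin n ⊕ Fin k → ℂ)
    (hp : Tendsto p U (𝓝 p₁)) (hy : ∀ s, y s ∈ Sol (mlP deg blk) (p s))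
    (hx : ∀ s l, y s (Sum.inl l) ≠ 0) (m : Fin k → I) (hmT : ∀ j, m j ∈ T ∧ blk (m j) = j)
    (hmax : ∀ s i, ‖mono (fun l => y s (Sum.inl l)) (deg i)‖ ≤
      ‖mono (fun l => y s (Sum.inl l)) (deg (m (blk i)))‖) :
    ∃ y₁, Tendsto y U (𝓝 y₁) := by
  let x : ι → Fin n → ℂ := fun s l => y s (Sum.inl l)
  let r : ι → I → ℂ := fun s i => mono (x s) (deg i) / mono (x s) (deg (m (blk i)))
  let μ : ι → Fin k → ℂ := fun s j => y s (Sum.inr j) * mono (x s) (deg (m j))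
  have hM : ∀ s d, mono (x s) d ≠ 0 := fun s d => mono_ne_zero (hx s) d
  have hr : ∀ s i, mono (x s) (deg i) = r s i * mono (x s) (deg (m (blk i))) := fun s i =>
    (div_mul_cancel₀ _ (hM s _)).symm
  obtain ⟨χ, hχ⟩ : ∃ χ, Tendsto r U (𝓝 χ) := by
    refine exists_tendsto_of_bdd U r 1 (Eventually.of_forall fun s =>
      (pi_norm_le_iff_of_nonneg zero_le_one).2 fun i => ?_)
    rw [norm_div]
    exact div_le_one_of_le₀ (hmax s i) (norm_nonneg _)
  have hχi : ∀ i, Tendsto (fun s => r s i) U (𝓝 (χ i)) := tendsto_pi_nhds.1 hχ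
  have hpc : ∀ e, Tendsto (fun s => p s e) U (𝓝 (p₁ e)) := tendsto_pi_nhds.1 hp
  have hχm : ∀ j, χ (m j) = 1 := by
    intro j
    refine tendsto_nhds_unique (hχi (m j)) (tendsto_const_nhds.congr fun s => ?_)
    simp only [r, (hmT j).2, div_self (hM s _)]
  -- the two families of equations in the coordinates `μ`, `r`
  have heq1 : ∀ s j, ∑ i with blk i = j, p s (Sum.inl i) * r s i = 0 := by
    intro s j
    have h1 := ((mem_Sol_mlP deg blk _ _).1 (hy s)).2 j
    refine mul_right_cancel₀ (hM s (deg (m j))) ?_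
    rw [zero_mul, ← h1, Finset.sum_mul]
    refine Finset.sum_congr rfl fun i hi => ?_
    rw [mul_assoc, show mono (fun l => y s (Sum.inl l)) (deg i) = _ from hr s i,
      (Finset.mem_filter.1 hi).2]
  have heq2 : ∀ s l, p s (Sum.inr l) =
      ∑ i, (deg i l : ℂ) * μ s (blk i) * p s (Sum.inl i) * r s i := by
    intro s l
    rw [((mem_Sol_mlP deg blk _ _).1 (hy s)).1 l]
    refine Finset.sum_congr rfl fun i _ => ?_
    rw [show mono (fun l => y s (Sum.inl l)) (deg i) = _ from hr s i]
    simp only [μ]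
    ring
  have hlim1 : ∀ j, ∑ i with blk i = j, p₁ (Sum.inl i) * χ i = 0 := by
    intro j
    refine tendsto_nhds_unique (tendsto_finsetSum _ fun i _ => (hpc (Sum.inl i)).mul (hχi i)) ?_
    exact tendsto_const_nhds.congr fun s => (heq1 s j).symm
  rcases tendsto_or_norm_atTop U μ with ⟨μ', hμ⟩ | hμ
  swap
  · -- the multipliers cannot escape
    exfalso
    obtain ⟨ν, hν0, hν⟩ := exists_tendsto_normalize U μ hμ
    have hνj := tendsto_pi_nhds.1 hν
    have hlim2 : ∀ l, ∑ i, (deg i l : ℂ) * ν (blk i) * p₁ (Sum.inl i) * χ i = 0 := by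
      intro l
      have h1 : Tendsto (fun s => ((‖μ s‖⁻¹ : ℝ) : ℂ) * p s (Sum.inr l)) U (𝓝 0) := by
        have h2 := ((Complex.continuous_ofReal.tendsto 0).comp hμ.inv_tendsto_atTop).mul
          (hpc (Sum.inr l))
        simpa using h2
      refine tendsto_nhds_unique (tendsto_finsetSum _ fun i _ =>
        ((tendsto_const_nhds.mul (hνj (blk i))).mul (hpc (Sum.inl i))).mul (hχi i)) (h1.congr ?_)
      intro s
      rw [heq2, Finset.mul_sum]
      refine Finset.sum_congr rfl fun i _ => ?_
      simp only [Pi.smul_apply, Complex.real_smul]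
      ring
    obtain ⟨ξ, hξ, hmono⟩ := exists_torus_point U x hx m χ hχi
    refine hν0 (funext fun j => ?_)
    obtain ⟨D, hD, hD'⟩ := h.richC (m j) (hmT j).1
    exact critical_torus_point_contra (fun i => p₁ (Sum.inl i)) m χ hχm (fun j => (hmT j).2) hξ
      hmono hlim1 ν hlim2 j D hD (fun i hi => hD' _ fun h => hi (Sum.inl_injective h))
  have hμj := tendsto_pi_nhds.1 hμ
  have hlim2 : ∀ l, p₁ (Sum.inr l) =
      ∑ i, (deg i l : ℂ) * μ' (blk i) * p₁ (Sum.inl i) * χ i := by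
    intro l
    refine tendsto_nhds_unique ((hpc (Sum.inr l)).congr fun s => heq2 s l)
      (tendsto_finsetSum _ fun i _ =>
        ((tendsto_const_nhds.mul (hμj (blk i))).mul (hpc (Sum.inl i))).mul (hχi i))
  rcases tendsto_or_norm_atTop U (fun s l => Real.log ‖x s l‖) with ⟨w, hw⟩ | hw
  swap
  · -- the point cannot run to infinity in the torus
    exfalso
    obtain ⟨ω, hω0, hω⟩ := exists_tendsto_normalize U _ hw
    have hωl := tendsto_pi_nhds.1 hω
    refine rational_span_contra (fun i l => (deg i l : ℤ) - deg (m (blk i)) l)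
      (fun i => μ' (blk i) * p₁ (Sum.inl i) * χ i) (fun l => p₁ (Sum.inr l)) ?_ ω hω0 ?_ ?_
    · intro l
      have h1 : ∑ i, μ' (blk i) * p₁ (Sum.inl i) * χ i * (deg (m (blk i)) l : ℂ) = 0 := by
        rw [← Finset.sum_fiberwise (s := Finset.univ) (g := blk)]
        refine Finset.sum_eq_zero fun j _ => ?_
        calc _ = (∑ i with blk i = j, p₁ (Sum.inl i) * χ i) * (μ' j * deg (m j) l) := by
              rw [Finset.sum_mul]
              refine Finset.sum_congr rfl fun i hi => ?_
              rw [(Finset.mem_filter.1 hi).2]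
              ring
          _ = 0 := by rw [hlim1, zero_mul]
      rw [hlim2 l]
      push_cast
      simp only [mul_sub, Finset.sum_sub_distrib, h1, sub_zero]
      refine Finset.sum_congr rfl fun i _ => ?_
      ring
    · intro i hi
      have hi' : χ i ≠ 0 := right_ne_zero_of_mul hi
      have h1 := hw.inv_tendsto_atTop.mul (tendsto_log_ratio U x hx m χ hχi i hi')
      rw [zero_mul] at h1
      refine tendsto_nhds_unique (tendsto_finsetSum _ fun l _ =>
        (hωl l).mul tendsto_const_nhds) (h1.congr fun s => ?_)
      simp only [Pi.smul_apply, smul_eq_mul, Pi.inv_apply, Finset.mul_sum]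
      refine Finset.sum_congr rfl fun l _ => ?_
      push_cast
      ring
    · intro l
      obtain ⟨D, hD, hD'⟩ := h.richU l
      exact ⟨D, hD, fun l' hl' => hD' _ fun h => hl' (Sum.inr_injective h)⟩
  obtain ⟨θ, hθ0, hθ⟩ := exists_tendsto_phase U x hx
  have hxl : Tendsto x U (𝓝 fun l => Complex.exp (w l) * θ l) := by
    rw [tendsto_pi_nhds]
    intro l
    have h1 : Tendsto (fun s => Complex.exp (Real.log ‖x s l‖ : ℝ)) U (𝓝 (Complex.exp (w l))) :=
      ((Complex.continuous_exp.comp Complex.continuous_ofReal).tendsto (w l)).comp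
        (tendsto_pi_nhds.1 hw l)
    exact (h1.mul (tendsto_pi_nhds.1 hθ l)).congr fun s => (phase_mul (hx s) l).symm
  have hx1 : ∀ l, Complex.exp (w l) * θ l ≠ 0 := fun l =>
    mul_ne_zero (Complex.exp_ne_zero _) (hθ0 l)
  refine ⟨Sum.elim (fun l => Complex.exp (w l) * θ l) fun j =>
    μ' j / mono (fun l => Complex.exp (w l) * θ l) (deg (m j)), ?_⟩
  rw [tendsto_pi_nhds]
  rintro (l | j)
  · exact tendsto_pi_nhds.1 hxl l
  · refine ((hμj j).div (((continuous_mono _).tendsto _).comp hxl)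
      (mono_ne_zero hx1 (deg (m j)))).congr fun s => ?_
    exact mul_div_cancel_right₀ _ (hM s _)

/-- Solutions do not escape near a rich parameter: along an ultrafilter, the points eventually lie
in the torus, and the choice of the largest monomials, being one of finitely many, is eventually
constant. -/
theorem Rich.proper {T : Set I} {p₁ : I ⊕ Fin n → ℂ} (h : Rich deg blk T p₁)
    (ι : Type) (U : Ultrafilter ι) (p : ι → I ⊕ Fin n → ℂ) (y : ι → Fin n ⊕ Fin k → ℂ)
    (hp : Tendsto p U (𝓝 p₁)) (hy : ∀ᶠ s in (U : Filter ι), y s ∈ Sol (mlP deg blk) (p s)) :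
    ∃ y₁, Tendsto y U (𝓝 y₁) := by
  have hx : ∀ᶠ s in (U : Filter ι), ∀ l, y s (Sum.inl l) ≠ 0 := by
    have h1 : ∀ᶠ s in (U : Filter ι), ∀ l, p s (Sum.inr l) ≠ 0 := by
      rw [eventually_all]
      intro l
      exact (tendsto_pi_nhds.1 hp (Sum.inr l)).eventually_ne (h.u_ne_zero l)
    filter_upwards [h1, hy] with s hs hs' l
    exact x_ne_zero_of_mem_Sol hs' l (hs l)
  have hm : ∀ s, ∃ m : Fin k → I, (∀ l, y s (Sum.inl l) ≠ 0) →
      (∀ j, m j ∈ T ∧ blk (m j) = j) ∧ ∀ i, ‖mono (fun l => y s (Sum.inl l)) (deg i)‖ ≤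
        ‖mono (fun l => y s (Sum.inl l)) (deg (m (blk i)))‖ := by
    intro s
    by_cases hs : ∀ l, y s (Sum.inl l) ≠ 0
    · obtain ⟨m, hm⟩ := h.exists_max hs
      exact ⟨m, fun _ => hm⟩
    · choose m _ using h.meets
      exact ⟨m, fun h => absurd h hs⟩
  choose m hm using hm
  obtain ⟨m₀, hm₀⟩ := exists_eventually_eq U m
  obtain ⟨V, hV⟩ := exists_restrict U
    (fun s => y s ∈ Sol (mlP deg blk) (p s) ∧ (∀ l, y s (Sum.inl l) ≠ 0) ∧ m s = m₀)
    (hy.and (hx.and hm₀))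
  obtain ⟨s₀⟩ : Nonempty {s // y s ∈ Sol (mlP deg blk) (p s) ∧
      (∀ l, y s (Sum.inl l) ≠ 0) ∧ m s = m₀} :=
    nonempty_of_neBot (V : Filter _)
  rw [← hV] at hp
  obtain ⟨y₁, hy₁⟩ := h.proper_aux V (fun s => p s.1) (fun s => y s.1) (tendsto_map'_iff.1 hp)
    (fun s => s.2.1) (fun s => s.2.2.1) m₀
    (fun j => by
      have := (hm s₀.1 s₀.2.2.1).1 j
      rwa [s₀.2.2.2] at this)
    (fun s i => by
      have := (hm s.1 s.2.2.1).2 i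
      rwa [s.2.2.2] at this)
  refine ⟨y₁, ?_⟩
  rw [← hV]
  exact tendsto_map'_iff.2 hy₁

/-- The number of solutions at a rich parameter is finite and is the generic number. -/
theorem Rich.generic {T : Set I} {p₁ : I ⊕ Fin n → ℂ} (h : Rich deg blk T p₁) :
    (Sol (mlP deg blk) p₁).Finite ∧ ∃ G : MvPolynomial (I ⊕ Fin n) ℂ, G ≠ 0 ∧
      ∀ p, eval p G ≠ 0 → (Sol (mlP deg blk) p).encard = (Sol (mlP deg blk) p₁).encard := by
  classical
  obtain ⟨hfin, hloc⟩ := locally_constant_count (mlP deg blk) p₁ h.det_jac_ne_zero h.proper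
  refine ⟨hfin, ?_⟩
  rw [← hfin.cast_ncard_eq] at hloc ⊢
  exact generic_count _ p₁ _ hloc
end

/-! ### Sparse systems -/

/-- The set of terms of a system with supports `S`. -/
abbrev Idx {n k : ℕ} (S : Fin k → Finset (Fin n →₀ ℕ)) : Type := Σ j : Fin k, {α // α ∈ S j}

section
variable {n k : ℕ} (S : Fin k → Finset (Fin n →₀ ℕ))

/-- The exponent of a term. -/
def Idx.deg (i : Idx S) (l : Fin n) : ℕ := i.2.1 l

/-- The equation to which a term belongs. -/
def Idx.blk (i : Idx S) : Fin k := i.1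

variable {S} in
theorem Idx.ext_pair {i i' : Idx S} (h1 : i.1 = i'.1) (h2 : i.2.1 = i'.2.1) : i = i' := by
  obtain ⟨j, α, hα⟩ := i
  obtain ⟨j', α', hα'⟩ := i'
  obtain rfl : j = j' := h1
  obtain rfl : α = α' := h2
  rfl

/-- The parameter of the universal ML system given by coefficients and data; coefficients outside
the supports are ignored. -/
def param (c : Fin k → (Fin n →₀ ℕ) → ℂ) (u : Fin n → ℂ) : Idx S ⊕ Fin n → ℂ :=
  Sum.elim (fun i => c i.1 i.2.1) u

theorem sum_Idx_filter (F : Fin k → (Fin n →₀ ℕ) → ℂ) (j : Fin k) :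
    ∑ i : Idx S with Idx.blk S i = j, F i.1 i.2.1 = ∑ α ∈ S j, F j α := by
  rw [Finset.sum_filter, Fintype.sum_sigma, Finset.sum_eq_single j]
  · simp only [Idx.blk, if_true]
    exact Finset.sum_coe_sort (S j) (F j)
  · intro j' _ hj'
    simp [Idx.blk, hj']
  · simp

theorem sum_Idx (F : Fin k → (Fin n →₀ ℕ) → ℂ) :
    ∑ i : Idx S, F i.1 i.2.1 = ∑ j, ∑ α ∈ S j, F j α := by
  rw [Fintype.sum_sigma]
  exact Finset.sum_congr rfl fun j _ => Finset.sum_coe_sort (S j) (F j)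

theorem eval_monomial_eq_mono (x : Fin n → ℂ) (α : Fin n →₀ ℕ) (a : ℂ) :
    eval x (monomial α a) = a * mono x α := by
  rw [eval_monomial, Finsupp.prod_fintype _ _ (fun _ => pow_zero _)]
  rfl

theorem mem_mlSol_iff (c : Fin k → (Fin n →₀ ℕ) → ℂ) (u : Fin n → ℂ)
    (y : Fin n ⊕ Fin k → ℂ) :
    ((fun l => y (Sum.inl l), fun j => y (Sum.inr j)) : (Fin n → ℂ) × (Fin k → ℂ)) ∈
        mlSol n k (fun j => sparsePoly n (S j) (c j)) u ↔
      y ∈ Sol (mlP (Idx.deg S) (Idx.blk S)) (param S c u) := by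
  rw [mem_Sol_mlP]
  refine and_congr (forall_congr' fun l => ?_) (forall_congr' fun j => ?_)
  · have h1 : ∀ j, y (Sum.inl l) *
        eval (fun l => y (Sum.inl l)) (pderiv l (sparsePoly n (S j) (c j))) =
        ∑ α ∈ S j, (α l : ℂ) * c j α * mono (fun l => y (Sum.inl l)) α := by
      intro j
      rw [sparsePoly, map_sum, map_sum, Finset.mul_sum]
      refine Finset.sum_congr rfl fun α _ => ?_
      have h2 := congrArg (eval fun l => y (Sum.inl l))
        (X_mul_pderiv_monomial (i := l) (m := α) (r := c j α))
      rw [map_mul, eval_X, map_nsmul, eval_monomial_eq_mono, nsmul_eq_mul, ← mul_assoc] at h2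
      exact h2
    have h3 : eval (Sum.elim (fun l => y (Sum.inl l)) fun j => y (Sum.inr j))
        (mlEll n k (fun j => sparsePoly n (S j) (c j)) u l) =
        u l - ∑ j, ∑ α ∈ S j, (α l : ℂ) * y (Sum.inr j) * c j α *
          mono (fun l => y (Sum.inl l)) α := by
      simp only [mlEll, map_sub, eval_C, map_mul, eval_X, Sum.elim_inl, map_sum, Sum.elim_inr,
        eval_rename]
      congr 1
      rw [Finset.mul_sum]
      refine Finset.sum_congr rfl fun j _ => ?_
      rw [mul_left_comm, show ((Sum.elim (fun l => y (Sum.inl l)) fun j => y (Sum.inr j)) ∘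
        Sum.inl : Fin n → ℂ) = fun l => y (Sum.inl l) from rfl, h1, Finset.mul_sum]
      refine Finset.sum_congr rfl fun α _ => ?_
      ring
    rw [h3, sub_eq_zero, ← sum_Idx S (fun j α => (α l : ℂ) * y (Sum.inr j) * c j α *
          mono (fun l => y (Sum.inl l)) α)]
    rfl
  · have h1 : eval (fun l => y (Sum.inl l)) (sparsePoly n (S j) (c j)) =
        ∑ α ∈ S j, c j α * mono (fun l => y (Sum.inl l)) α := by
      simp only [sparsePoly, map_sum, eval_monomial_eq_mono]
    rw [h1, ← sum_Idx_filter S (fun j α => c j α * mono (fun l => y (Sum.inl l)) α)]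
    rfl

theorem encard_mlSol (c : Fin k → (Fin n →₀ ℕ) → ℂ) (u : Fin n → ℂ) :
    (mlSol n k (fun j => sparsePoly n (S j) (c j)) u).encard =
      (Sol (mlP (Idx.deg S) (Idx.blk S)) (param S c u)).encard := by
  let e : (Fin n ⊕ Fin k → ℂ) ≃ (Fin n → ℂ) × (Fin k → ℂ) := Equiv.sumArrowEquivProdArrow _ _ _
  have h : mlSol n k (fun j => sparsePoly n (S j) (c j)) u =
      e '' Sol (mlP (Idx.deg S) (Idx.blk S)) (param S c u) := by
    ext z
    rw [e.image_eq_preimage_symm, Set.mem_preimage, ← mem_mlSol_iff]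
    rfl
  rw [h, e.injective.encard_image]

/-- The supports `A` determine the generic number of solutions for all larger supports `S` with the
same Newton polytopes (expressed by support functions): an algebraically independent parameter for
`A`, extended by zero coefficients, is rich for `S`, and it defines the same system as for `A`. -/
theorem exists_generic_count (A : Fin k → Finset (Fin n →₀ ℕ)) (hA : ∀ j, (A j).Nonempty) :
    ∃ d : ℕ, ∀ S : Fin k → Finset (Fin n →₀ ℕ), (∀ j, A j ⊆ S j) →
      (∀ (w : Fin n → ℝ) j, ∀ β ∈ S j, ∃ α ∈ A j,
        ∑ l, w l * (β l : ℝ) ≤ ∑ l, w l * (α l : ℝ)) →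
      ∃ G : MvPolynomial (Idx S ⊕ Fin n) ℂ, G ≠ 0 ∧ ∀ p, eval p G ≠ 0 →
        (Sol (mlP (Idx.deg S) (Idx.blk S)) p).encard = d := by
  classical
  obtain ⟨p, hp⟩ := exists_rich (Idx A ⊕ Fin n)
  let c : Fin k → (Fin n →₀ ℕ) → ℂ := fun j α =>
    if h : α ∈ A j then p (Sum.inl ⟨j, α, h⟩) else 0
  let u : Fin n → ℂ := fun l => p (Sum.inr l)
  have hc : ∀ j α (h : α ∈ A j), c j α = p (Sum.inl ⟨j, α, h⟩) := fun j α h => dif_pos h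
  have hc0 : ∀ j α, α ∉ A j → c j α = 0 := fun j α h => dif_neg h
  have hrich : ∀ S : Fin k → Finset (Fin n →₀ ℕ), (∀ j, A j ⊆ S j) →
      (∀ (w : Fin n → ℝ) j, ∀ β ∈ S j, ∃ α ∈ A j,
        ∑ l, w l * (β l : ℝ) ≤ ∑ l, w l * (α l : ℝ)) →
      Rich (Idx.deg S) (Idx.blk S) {i | i.2.1 ∈ A i.1} (param S c u) := by
    intro S hAS hull
    refine ⟨fun i hi => hc0 _ _ hi, fun i hi => ?_, fun l => ?_, fun j => ?_, fun w i => ?_⟩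
    · obtain ⟨D, hD, hD'⟩ := hp (Sum.inl ⟨i.1, i.2.1, hi⟩)
      refine ⟨D, (congrArg D (hc _ _ hi)).trans hD, ?_⟩
      rintro (i' | l) hne
      · by_cases hi' : i'.2.1 ∈ A i'.1
        · refine (congrArg D (hc _ _ hi')).trans (hD' _ fun h => hne ?_)
          have h1 := Sum.inl_injective h
          have h2 : i'.1 = i.1 := congrArg (fun t : Idx A => t.1) h1
          have h3 : i'.2.1 = i.2.1 := congrArg (fun t : Idx A => t.2.1) h1
          rw [Idx.ext_pair h2 h3]
        · exact (congrArg D (hc0 _ _ hi')).trans (map_zero D)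
      · exact hD' (Sum.inr l) Sum.inr_ne_inl
    · obtain ⟨D, hD, hD'⟩ := hp (Sum.inr l)
      refine ⟨D, hD, ?_⟩
      rintro (i' | l') hne
      · by_cases hi' : i'.2.1 ∈ A i'.1
        · exact (congrArg D (hc _ _ hi')).trans (hD' _ Sum.inl_ne_inr)
        · exact (congrArg D (hc0 _ _ hi')).trans (map_zero D)
      · exact hD' (Sum.inr l') fun h => hne (congrArg Sum.inr (Sum.inr_injective h))
    · obtain ⟨α, hα⟩ := hA j
      exact ⟨⟨j, α, hAS j hα⟩, hα, rfl⟩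
    · obtain ⟨α, hα, hle⟩ := hull w i.1 i.2.1 i.2.2
      exact ⟨⟨i.1, α, hAS _ hα⟩, hα, rfl, hle⟩
  refine ⟨(mlSol n k (fun j => sparsePoly n (A j) (c j)) u).ncard, fun S hAS hull => ?_⟩
  obtain ⟨hfin, G, hG, h⟩ := (hrich S hAS hull).generic
  refine ⟨G, hG, fun q hq => (h q hq).trans ?_⟩
  -- enlarging the supports by terms with zero coefficient changes nothing
  have hpoly : (fun j => sparsePoly n (S j) (c j)) = fun j => sparsePoly n (A j) (c j) := by
    ext1 j
    refine (Finset.sum_subset (hAS j) fun α _ hα => ?_).symm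
    rw [hc0 j α hα, map_zero]
  have h1 := encard_mlSol S c u
  rw [hpoly] at h1
  rw [← h1]
  refine (Set.Finite.cast_ncard_eq ?_).symm
  rw [← Set.encard_lt_top_iff, h1]
  exact hfin.encard_lt_top

/-- The generic count for the universal system with supports `S`, in terms of ML systems and of
polynomials in all the coefficients `c j α`. -/
theorem exists_mlDegree_polynomial (d : ℕ) (G : MvPolynomial (Idx S ⊕ Fin n) ℂ) (hG : G ≠ 0)
    (h : ∀ p, eval p G ≠ 0 → (Sol (mlP (Idx.deg S) (Idx.blk S)) p).encard = d) :
    ∃ G' : MvPolynomial ((Fin k × (Fin n →₀ ℕ)) ⊕ Fin n) ℂ, G' ≠ 0 ∧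
      ∀ (c : Fin k → (Fin n →₀ ℕ) → ℂ) (u : Fin n → ℂ),
        eval (Sum.elim (fun p : Fin k × (Fin n →₀ ℕ) => c p.1 p.2) u) G' ≠ 0 →
          (mlSol n k (fun j => sparsePoly n (S j) (c j)) u).Finite ∧
          (mlSol n k (fun j => sparsePoly n (S j) (c j)) u).ncard = d := by
  let φ : Idx S ⊕ Fin n → (Fin k × (Fin n →₀ ℕ)) ⊕ Fin n :=
    Sum.map (fun i => (i.1, i.2.1)) id
  have hφ : Function.Injective φ := Sum.map_injective.2
    ⟨fun i i' h => Idx.ext_pair (congrArg Prod.fst h) (congrArg Prod.snd h),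
      Function.injective_id⟩
  refine ⟨rename φ G, fun h0 => hG (rename_injective φ hφ (by rw [h0, map_zero])), ?_⟩
  intro c u hcu
  rw [eval_rename] at hcu
  have h1 : (mlSol n k (fun j => sparsePoly n (S j) (c j)) u).encard = d := by
    rw [encard_mlSol]
    refine h _ ?_
    convert hcu using 3
    ext (i | l) <;> rfl
  exact ⟨Set.finite_of_encard_eq_coe h1, by rw [Set.ncard, h1, ENat.toNat_natCast]⟩

theorem exists_le_of_convexHull {A B : Finset (Fin n →₀ ℕ)} (hA : A.Nonempty)
    (hconv : convexHull ℝ ((fun α : Fin n →₀ ℕ => fun i => ((α i : ℕ) : ℝ)) '' ↑A) =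
      convexHull ℝ ((fun β : Fin n →₀ ℕ => fun i => ((β i : ℕ) : ℝ)) '' ↑B))
    (w : Fin n → ℝ) (β : Fin n →₀ ℕ) (hβ : β ∈ B) :
    ∃ α ∈ A, ∑ l, w l * (β l : ℝ) ≤ ∑ l, w l * (α l : ℝ) := by
  obtain ⟨α, hα, hmax⟩ := Finset.exists_max_image A (fun α => ∑ l, w l * (α l : ℝ)) hA
  refine ⟨α, hα, ?_⟩
  have hlin : IsLinearMap ℝ fun v : Fin n → ℝ => ∑ l, w l * v l :=
    ⟨fun v v' => by simp [mul_add, Finset.sum_add_distrib],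
      fun a v => by simp [Finset.mul_sum, mul_left_comm]⟩
  have h1 : convexHull ℝ ((fun α : Fin n →₀ ℕ => fun i => ((α i : ℕ) : ℝ)) '' ↑A) ⊆
      {v | ∑ l, w l * v l ≤ ∑ l, w l * (α l : ℝ)} := by
    refine convexHull_min ?_ (convex_halfSpace_le hlin _)
    rintro _ ⟨α', hα', rfl⟩
    exact hmax α' hα'
  rw [hconv] at h1
  exact h1 (subset_convexHull ℝ _ ⟨β, hβ, rfl⟩)
end

end

/-- if two tuples of finite nonempty supports `A_•`, `B_•` satisfy
`conv(A_j) = conv(B_j)` for all `j`, then the corresponding general sparse systems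
have the same ML degree `d`: there are nonzero generic-coefficient polynomials `G_A`
and `G_B` outside whose zero sets the respective ML systems have exactly `d`
solutions in `ℂ^{n+k}`. -/
theorem statement14 (n k : ℕ) (hn : 0 < n) (hk : 0 < k)
    (A B : Fin k → Finset (Fin n →₀ ℕ))
    (hA : ∀ j, (A j).Nonempty) (hB : ∀ j, (B j).Nonempty)
    (hconv : ∀ j,
      convexHull ℝ ((fun α : Fin n →₀ ℕ => fun i => ((α i : ℕ) : ℝ)) '' ↑(A j)) =
      convexHull ℝ ((fun β : Fin n →₀ ℕ => fun i => ((β i : ℕ) : ℝ)) '' ↑(B j))) :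
    ∃ d : ℕ,
      (∃ GA : MvPolynomial ((Fin k × (Fin n →₀ ℕ)) ⊕ Fin n) ℂ, GA ≠ 0 ∧
        ∀ (c : Fin k → (Fin n →₀ ℕ) → ℂ) (u : Fin n → ℂ),
          eval (Sum.elim (fun p : Fin k × (Fin n →₀ ℕ) => c p.1 p.2) u) GA ≠ 0 →
            (mlSol n k (fun j => sparsePoly n (A j) (c j)) u).Finite ∧
            (mlSol n k (fun j => sparsePoly n (A j) (c j)) u).ncard = d) ∧
      (∃ GB : MvPolynomial ((Fin k × (Fin n →₀ ℕ)) ⊕ Fin n) ℂ, GB ≠ 0 ∧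
        ∀ (c' : Fin k → (Fin n →₀ ℕ) → ℂ) (u' : Fin n → ℂ),
          eval (Sum.elim (fun p : Fin k × (Fin n →₀ ℕ) => c' p.1 p.2) u') GB ≠ 0 →
            (mlSol n k (fun j => sparsePoly n (B j) (c' j)) u').Finite ∧
            (mlSol n k (fun j => sparsePoly n (B j) (c' j)) u').ncard = d) := by
  classical
  obtain ⟨d, hd⟩ := exists_generic_count A hA
  obtain ⟨d', hd'⟩ := exists_generic_count B hB
  obtain ⟨GA, hGA, hA'⟩ := hd A (fun j => subset_rfl) fun w j β hβ => ⟨β, hβ, le_rfl⟩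
  obtain ⟨GB, hGB, hB'⟩ := hd' B (fun j => subset_rfl) fun w j β hβ => ⟨β, hβ, le_rfl⟩
  -- both degrees are compared with that of the union of the supports
  obtain ⟨G, hG, h⟩ := hd (fun j => A j ∪ B j) (fun j => Finset.subset_union_left)
    fun w j β hβ => (Finset.mem_union.1 hβ).elim (fun hβ => ⟨β, hβ, le_rfl⟩)
      fun hβ => exists_le_of_convexHull (hA j) (hconv j) w β hβ
  obtain ⟨G', hG', h'⟩ := hd' (fun j => A j ∪ B j) (fun j => Finset.subset_union_right)
    fun w j β hβ => (Finset.mem_union.1 hβ).elim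
      (fun hβ => exists_le_of_convexHull (hB j) (hconv j).symm w β hβ)
      fun hβ => ⟨β, hβ, le_rfl⟩
  have hdd : d = d' := by
    obtain ⟨p, hp⟩ := (frequently_eval_ne_zero 0 (G * G') (mul_ne_zero hG hG')).exists
    rw [map_mul] at hp
    exact_mod_cast (h p (left_ne_zero_of_mul hp)).symm.trans (h' p (right_ne_zero_of_mul hp))
  subst hdd
  exact ⟨d, exists_mlDegree_polynomial A d GA hGA hA', exists_mlDegree_polynomial B d GB hGB hB'⟩
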